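/- There exists δ > 0 such that if ‖(a,b)‖₃ < δ, then: (i) for every s ≥ 2 and γ ∈ H^{s−1/2}_0(𝕋): ‖dS(a,b)*[γ]‖_s ≤ C(s)‖γ‖_{s−1/2} + C(s)‖(a,b)‖_s‖γ‖_{3/2}; (ii) for every s ≥ 2: ‖(dS(a,b)* − dS(0,0)*)γ‖_s ≤ C(s)‖(a,b)‖₂‖γ‖_{s+1/2} + C(s)‖(a,b)‖_s‖γ‖_{5/2}; with positive constants C(s). -/

import Mathlib

/-!
The operator `dS(a,b)*` is a superposition of the modes `J_n(j(A + a(x))) e^{ij(x + b(x))}`, with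
`n = 1` for the second component and, since `J_1' = (J_0 - J_2)/2`, with `n = 0, 2` for the first.
Everything is proved for the finite sums `F` of such modes, uniformly in the finite set of
frequencies, and passed to the series at the end (`sob_le_of_series`).

*Gain of half a derivative in `L²`* (`F_L2`). Bessel's equation gives
`√θ J_n(θ) = L e^{iθ} + L̄ e^{-iθ} + O(1/θ)` (`Jn_asymp`). So, up to a remainder that is absolutely
summable, `F` is `(A + a)^{-1/2}` times two waves `∑ c_j ⟨j⟩^{-1/2} e^{ij(x + b ± (A + a))}`. If `(a,b)`
is small in `H³`, hence `a`, `a'` and `b'` in `L^∞`, then `x ↦ x + b ± (A + a)` is a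
diffeomorphism of the circle, and a change of variables and Parseval's identity bound each wave.

*Bounds in `H^s`*. The derivative of `F` is a combination, with coefficients `a'` and `1 + b'`, of
sums of the same kind for the sequence `j c_j` (`F_deriv`). With the product estimate `sob_mul` this
gives the bound `‖F‖_s ≤ C ‖c‖_{s-1/2}` for `s = 1, 2, 3`, and then, by a real interpolation with
dyadic splittings of `c`, for all `0 ≤ s ≤ 3` (`G_interp`). For larger `s` the tame estimate (`EE_all`)
follows by induction from `s` to `s + 1`, starting at `2 ≤ s < 3`: the mixed terms
`‖(a,b)‖_s ‖c‖_{5/2}` that arise are absorbed with the interpolation inequality `pair_interp`. This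
is the first estimate.

*The difference*. The derivative of `F` along the segment `t ↦ (ta, tb)` is `a X + b Y`, where `X` and
`Y` are sums of the same kind for the sequence `j c_j`. The product estimate, the first estimate at the
points of the segment and the mean value inequality `sob_increment` give the second (`F_diff`).
-/

open scoped Real BigOperators
open MeasureTheory

noncomputable section

def jb (j : ℤ) : ℝ := max 1 |(j : ℝ)|

def fc (u : ℝ → ℂ) (j : ℤ) : ℂ :=
  (1 / (2 * (π : ℂ))) * ∫ x in (0:ℝ)..(2 * π), u x * Complex.exp (-Complex.I * (j : ℂ) * (x : ℂ))

def fcR (u : ℝ → ℝ) (j : ℤ) : ℂ := fc (fun x => (u x : ℂ)) j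

def sobNorm (s : ℝ) (u : ℝ → ℂ) : ℝ :=
  Real.sqrt (∑' j : ℤ, jb j ^ (2 * s) * ‖fc u j‖ ^ 2)

def memHs (s : ℝ) (u : ℝ → ℂ) : Prop :=
  Summable (fun j : ℤ => jb j ^ (2 * s) * ‖fc u j‖ ^ 2)

def sobNormR (s : ℝ) (u : ℝ → ℝ) : ℝ := sobNorm s (fun x => (u x : ℂ))
def memHsR (s : ℝ) (u : ℝ → ℝ) : Prop := memHs s (fun x => (u x : ℂ))

def pairNorm (s : ℝ) (a b : ℝ → ℝ) : ℝ := sobNormR s a + sobNormR s b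

def seqNorm (s : ℝ) (c : ℤ → ℂ) : ℝ :=
  Real.sqrt (∑' j : ℤ, jb j ^ (2 * s) * ‖c j‖ ^ 2)

def memSeq (s : ℝ) (c : ℤ → ℂ) : Prop :=
  Summable (fun j : ℤ => jb j ^ (2 * s) * ‖c j‖ ^ 2)

def smoothPer (u : ℝ → ℝ) : Prop :=
  ContDiff ℝ (⊤ : ℕ∞) u ∧ Function.Periodic u (2 * π)

def J1 (θ : ℝ) : ℝ :=
  ((1 / (2 * (π : ℂ))) * ∫ φ in (0:ℝ)..(2 * π),
    Complex.exp (Complex.I * (θ : ℂ) * (Real.sin φ : ℂ)) * Complex.exp (-Complex.I * (φ : ℂ))).re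

/-- First component of the adjoint dS(a,b)* applied to γ. -/
def dSstar1 (Astar : ℝ) (a b : ℝ → ℝ) (γ : ℝ → ℝ) (x : ℝ) : ℂ :=
  2 * (π : ℂ) * ∑' j : ℤ, if j = 0 then 0 else
    ((deriv J1 ((j : ℝ) * (Astar + a x)) : ℝ) : ℂ) *
      Complex.exp (Complex.I * (j : ℂ) * ((x + b x : ℝ) : ℂ)) * fcR γ j

/-- Second component of the adjoint dS(a,b)* applied to γ. -/
def dSstar2 (Astar : ℝ) (a b : ℝ → ℝ) (γ : ℝ → ℝ) (x : ℝ) : ℂ :=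
  2 * (π : ℂ) * Complex.I * ∑' j : ℤ, if j = 0 then 0 else
    ((J1 ((j : ℝ) * (Astar + a x)) : ℝ) : ℂ) *
      Complex.exp (Complex.I * (j : ℂ) * ((x + b x : ℝ) : ℂ)) * fcR γ j

/-! ### Fourier coefficients of smooth periodic functions -/

/-- Smooth `2π`-periodic complex-valued functions on the line. -/
def Sm (f : ℝ → ℂ) : Prop := ContDiff ℝ (⊤ : ℕ∞) f ∧ Function.Periodic f (2 * π)

lemma Sm.cont {f : ℝ → ℂ} (hf : Sm f) : Continuous f := hf.1.continuous

lemma Sm.add {f g : ℝ → ℂ} (hf : Sm f) (hg : Sm g) : Sm (fun x => f x + g x) :=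
  ⟨hf.1.add hg.1, fun x => by simp only [hf.2 x, hg.2 x]⟩

lemma Sm.mul {f g : ℝ → ℂ} (hf : Sm f) (hg : Sm g) : Sm (fun x => f x * g x) :=
  ⟨hf.1.mul hg.1, fun x => by simp only [hf.2 x, hg.2 x]⟩

lemma Sm.const (c : ℂ) : Sm (fun _ => c) := ⟨contDiff_const, fun _ => rfl⟩

lemma Sm.sum {ι : Type*} (S : Finset ι) {f : ι → ℝ → ℂ} (hf : ∀ i ∈ S, Sm (f i)) :
    Sm (fun x => ∑ i ∈ S, f i x) :=
  ⟨ContDiff.sum fun i hi => (hf i hi).1,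
    fun x => Finset.sum_congr rfl fun i hi => (hf i hi).2 x⟩

lemma Sm.diff {f : ℝ → ℂ} (hf : Sm f) : Differentiable ℝ f :=
  (contDiff_infty_iff_deriv.1 hf.1).1

lemma Sm.deriv {f : ℝ → ℂ} (hf : Sm f) : Sm (deriv f) := by
  refine ⟨(contDiff_infty_iff_deriv.1 hf.1).2, fun x => ?_⟩
  have h : (fun y => f (y + 2 * π)) = f := funext hf.2
  rw [← deriv_comp_add_const, h]

lemma Sm.bounded {f : ℝ → ℂ} (hf : Sm f) : ∃ M, ∀ x, ‖f x‖ ≤ M := by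
  obtain ⟨M, hM⟩ := (hf.2.isBounded_of_continuous Real.two_pi_pos.ne' hf.cont).exists_norm_le
  exact ⟨M, fun x => hM _ ⟨x, rfl⟩⟩

/-- The character `x ↦ e^{ikx}`. -/
def ee (k : ℤ) (x : ℝ) : ℂ := Complex.exp (Complex.I * (k : ℂ) * (x : ℂ))

lemma ee_norm (k : ℤ) (x : ℝ) : ‖ee k x‖ = 1 := by
  rw [ee, Complex.norm_exp]; simp

lemma ee_add (k l : ℤ) (x : ℝ) : ee (k + l) x = ee k x * ee l x := by
  simp only [ee, ← Complex.exp_add]; push_cast; ring_nf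

lemma ee_neg (k : ℤ) (x : ℝ) : Complex.exp (-Complex.I * (k : ℂ) * (x : ℂ)) = ee (-k) x := by
  simp [ee]

lemma ee_hasDerivAt (k : ℤ) (x : ℝ) : HasDerivAt (ee k) (Complex.I * k * ee k x) x := by
  have h : HasDerivAt (fun z : ℂ => Complex.exp (Complex.I * (k : ℂ) * z))
      (Complex.exp (Complex.I * (k : ℂ) * x) * (Complex.I * k)) (x : ℂ) := by
    have := ((hasDerivAt_id (x : ℂ)).const_mul (Complex.I * (k : ℂ))).cexp
    simpa only [mul_one, id] using this
  have := h.comp_ofReal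
  rw [mul_comm (Complex.exp _)] at this
  exact this

lemma ee_sm (k : ℤ) : Sm (ee k) := by
  constructor
  · unfold ee
    have : ContDiff ℝ (⊤ : ℕ∞) (fun x : ℝ => (x : ℂ)) := Complex.ofRealCLM.contDiff
    fun_prop
  · intro x
    have : Complex.I * (k : ℂ) * ((x + 2 * π : ℝ) : ℂ)
        = Complex.I * k * x + k * (2 * π * Complex.I) := by push_cast; ring
    rw [ee, this, Complex.exp_add, Complex.exp_int_mul_two_pi_mul_I, mul_one, ee]

lemma fc_eq (u : ℝ → ℂ) (k : ℤ) :
    fc u k = (1 / (2 * (π : ℂ))) * ∫ x in (0:ℝ)..(2 * π), u x * ee (-k) x := by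
  simp only [fc, ee_neg]

lemma two_pi_norm : ‖(1 / (2 * (π : ℂ)))‖ = 1 / (2 * π) := by
  have := Real.pi_pos
  simp [abs_of_pos this]

lemma fc_add {f g : ℝ → ℂ} (hf : Continuous f) (hg : Continuous g) (k : ℤ) :
    fc (fun x => f x + g x) k = fc f k + fc g k := by
  have := (ee_sm (-k)).cont
  rw [fc_eq, fc_eq, fc_eq, ← mul_add, ← intervalIntegral.integral_add]
  · simp only [add_mul]
  · exact (hf.mul this).intervalIntegrable _ _
  · exact (hg.mul this).intervalIntegrable _ _

lemma fc_smul (f : ℝ → ℂ) (c : ℂ) (k : ℤ) : fc (fun x => c * f x) k = c * fc f k := by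
  simp only [fc_eq, mul_assoc, intervalIntegral.integral_const_mul]
  ring

lemma fc_norm_le {f : ℝ → ℂ} {M : ℝ} (h : ∀ x, ‖f x‖ ≤ M) (k : ℤ) : ‖fc f k‖ ≤ M := by
  have h2 := Real.two_pi_pos
  rw [fc_eq, norm_mul, two_pi_norm]
  have := intervalIntegral.norm_integral_le_of_norm_le_const (a := 0) (b := 2 * π)
    (f := fun x => f x * ee (-k) x) (C := M) (fun x _ => by rw [norm_mul, ee_norm, mul_one]; exact h x)
  rw [sub_zero, abs_of_pos h2] at this
  calc _ ≤ 1 / (2 * π) * (M * (2 * π)) := by gcongr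
    _ = M := by field_simp

lemma fc_deriv {f : ℝ → ℂ} (hf : Sm f) (k : ℤ) : fc (deriv f) k = Complex.I * k * fc f k := by
  have h := intervalIntegral.integral_mul_deriv_eq_deriv_mul (a := 0) (b := 2 * π)
    (u := ee (-k)) (v := f) (u' := fun x => Complex.I * ((-k : ℤ) : ℂ) * ee (-k) x) (v' := deriv f)
    (fun x _ => ee_hasDerivAt _ x) (fun x _ => (hf.diff x).hasDerivAt)
    ((continuous_const.mul (ee_sm _).cont).intervalIntegrable _ _)
    (hf.deriv.cont.intervalIntegrable _ _)
  have e1 : ee (-k) (2 * π) = ee (-k) 0 := by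
    have := (ee_sm (-k)).2 0; rwa [zero_add] at this
  have e2 : f (2 * π) = f 0 := by
    have := hf.2 0; rwa [zero_add] at this
  rw [e1, e2, sub_self, zero_sub] at h
  rw [fc_eq, fc_eq]
  simp only [mul_comm (deriv f _), mul_comm (f _)]
  rw [h]
  simp only [mul_assoc, intervalIntegral.integral_const_mul]
  push_cast; ring

lemma jb_ge_one (k : ℤ) : 1 ≤ jb k := le_max_left _ _
lemma jb_pos (k : ℤ) : 0 < jb k := lt_of_lt_of_le one_pos (jb_ge_one k)
lemma jb_of_ne {k : ℤ} (hk : k ≠ 0) : jb k = |(k : ℝ)| := by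
  rw [jb, max_eq_right]
  exact_mod_cast Int.one_le_abs hk
lemma jb_zero : jb 0 = 1 := by simp [jb]
lemma abs_le_jb (k : ℤ) : |(k : ℝ)| ≤ jb k := le_max_right _ _

lemma jb_neg (k : ℤ) : jb (-k) = jb k := by simp [jb]

/-- Fourier coefficients of smooth functions decay faster than any power: integrate by parts. -/
lemma fc_decay (m : ℕ) : ∀ f : ℝ → ℂ, Sm f → ∃ C, ∀ k, jb k ^ m * ‖fc f k‖ ≤ C := by
  induction m with
  | zero =>
    intro f hf
    obtain ⟨M, hM⟩ := hf.bounded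
    exact ⟨M, fun k => by simpa using fc_norm_le hM k⟩
  | succ m ih =>
    intro f hf
    obtain ⟨C, hC⟩ := ih _ hf.deriv
    refine ⟨max C ‖fc f 0‖, fun k => ?_⟩
    by_cases hk : k = 0
    · subst hk; simp [jb_zero]
    · refine le_trans (le_of_eq ?_) ((hC k).trans (le_max_left _ _))
      rw [fc_deriv hf, norm_mul, norm_mul, Complex.norm_I, jb_of_ne hk]
      simp only [Complex.norm_intCast]
      ring

lemma jb_summable : Summable (fun k : ℤ => (jb k ^ 2)⁻¹) := by
  have h : Summable (fun k : ℤ => ((|(k : ℝ)| ^ 2))⁻¹ + if k = 0 then 1 else 0) := by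
    apply Summable.add
    · simpa using Real.summable_one_div_int_pow.2 (one_lt_two)
    · exact (hasSum_ite_eq 0 1).summable
  refine Summable.of_nonneg_of_le (fun k => by have := jb_pos k; positivity) (fun k => ?_) h
  by_cases hk : k = 0
  · subst hk; simp [jb_zero]
  · simp [hk, jb_of_ne hk]

/-- Smooth periodic functions have summable weighted Fourier coefficients of every order, so that for
them no infinite sum in `sobNorm` is a junk value. -/
lemma Sm.memHs {f : ℝ → ℂ} (hf : Sm f) (s : ℝ) : memHs s f := by
  obtain ⟨m, hm⟩ := exists_nat_ge (2 * s + 2)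
  obtain ⟨C, hC⟩ := fc_decay m f hf
  obtain ⟨M, hM⟩ := hf.bounded
  refine Summable.of_nonneg_of_le (fun k => by have := jb_pos k; positivity) (fun k => ?_)
    (jb_summable.mul_left (C * M))
  have h0 := jb_pos k
  have h1 : jb k ^ (2 * s) * jb k ^ 2 ≤ jb k ^ m := by
    rw [← Real.rpow_natCast, ← Real.rpow_natCast, ← Real.rpow_add h0]
    exact Real.rpow_le_rpow_of_exponent_le (jb_ge_one k) (by push_cast; exact hm)
  rw [← div_eq_mul_inv, le_div_iff₀ (by positivity)]
  calc jb k ^ (2 * s) * ‖fc f k‖ ^ 2 * jb k ^ 2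
      = (jb k ^ (2 * s) * jb k ^ 2) * ‖fc f k‖ * ‖fc f k‖ := by ring
    _ ≤ jb k ^ m * ‖fc f k‖ * ‖fc f k‖ := by gcongr
    _ ≤ C * M := by
      gcongr
      · exact le_trans (by positivity) (hC k)
      · exact hC k
      · exact fc_norm_le hM k

lemma Sm.summable_fc {f : ℝ → ℂ} (hf : Sm f) : Summable (fun k => ‖fc f k‖) := by
  obtain ⟨C, hC⟩ := fc_decay 2 f hf
  refine Summable.of_nonneg_of_le (fun k => norm_nonneg _) (fun k => ?_) (jb_summable.mul_left C)
  have h0 := jb_pos k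
  rw [← div_eq_mul_inv, le_div_iff₀ (by positivity), mul_comm]
  exact hC k

/-- Fourier inversion for smooth periodic functions. -/
lemma Sm.hasSum {f : ℝ → ℂ} (hf : Sm f) (x : ℝ) : HasSum (fun k => fc f k * ee k x) (f x) := by
  have : Fact (0 < 2 * π) := ⟨Real.two_pi_pos⟩
  let F : C(AddCircle (2 * π), ℂ) := ⟨hf.2.lift, continuous_coinduced_dom.mpr hf.cont⟩
  have hexp : ∀ (k : ℤ) (x : ℝ), fourier k (x : AddCircle (2 * π)) = ee k x := by
    intro k x
    rw [fourier_coe_apply, ee]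
    congr 1
    have : (π : ℂ) ≠ 0 := by exact_mod_cast Real.pi_ne_zero
    push_cast; field_simp
  have hfc : ∀ k, fourierCoeff F k = fc f k := by
    intro k
    rw [fourierCoeff_eq_intervalIntegral _ _ 0, zero_add, fc_eq]
    have e : ∀ x : ℝ, fourier (-k) (x : AddCircle (2 * π)) • F (x : AddCircle (2 * π))
        = f x * ee (-k) x := by
      intro x; rw [hexp, smul_eq_mul, mul_comm]; rfl
    simp only [e]
    rw [Complex.real_smul]; push_cast; rfl
  have h := has_pointwise_sum_fourier_series_of_summable (f := F)
    (by rw [funext hfc]; exact hf.summable_fc.of_norm) (x : AddCircle (2 * π))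
  simp only [hfc, hexp, smul_eq_mul] at h
  exact h

/-- Integrating an absolutely convergent Fourier series against a continuous function. -/
lemma hasSum_fc_mul {ι : Type*} [Countable ι] {d : ι → ℂ} {e : ι → ℝ → ℂ} {u v : ℝ → ℂ} {M : ℝ}
    (hd : Summable (fun l => ‖d l‖)) (he : ∀ l, Continuous (e l)) (hM : ∀ l x, ‖e l x‖ ≤ M)
    (hu : ∀ x, HasSum (fun l => d l * e l x) (u x)) (hv : Continuous v) (k : ℤ) :
    HasSum (fun l => d l * fc (fun x => e l x * v x) k) (fc (fun x => u x * v x) k) := by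
  obtain ⟨B, hB⟩ := (isCompact_Icc (a := (0:ℝ)) (b := 2 * π)).exists_bound_of_continuousOn
    hv.continuousOn
  have hle : (0:ℝ) ≤ 2 * π := Real.two_pi_pos.le
  have h := intervalIntegral.hasSum_integral_of_dominated_convergence
    (μ := volume) (a := 0) (b := 2 * π)
    (F := fun l x => d l * e l x * (v x * ee (-k) x)) (f := fun x => u x * (v x * ee (-k) x))
    (fun l _ => ‖d l‖ * M * B)
    (fun l => ((continuous_const.mul (he l)).mul (hv.mul (ee_sm _).cont)).aestronglyMeasurable)
    (fun l => ae_of_all _ fun x hx => by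
      rw [Set.uIoc_of_le hle] at hx
      rw [norm_mul, norm_mul, norm_mul, ee_norm, mul_one]
      have hB' := hB x ⟨hx.1.le, hx.2⟩
      have hM' := hM l x
      have : 0 ≤ M := (norm_nonneg _).trans hM'
      gcongr)
    (ae_of_all _ fun x _ => (hd.mul_right M).mul_right B)
    (by simp)
    (ae_of_all _ fun x _ => (hu x).mul_right _)
  have h2 := h.mul_left (1 / (2 * (π : ℂ)))
  have e1 : ∀ l, d l * fc (fun x => e l x * v x) k = 1 / (2 * (π : ℂ)) *
      ∫ x in (0:ℝ)..(2 * π), d l * e l x * (v x * ee (-k) x) := by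
    intro l
    simp only [fc_eq, mul_assoc, intervalIntegral.integral_const_mul]
    ring
  have e2 : fc (fun x => u x * v x) k = 1 / (2 * (π : ℂ)) *
      ∫ x in (0:ℝ)..(2 * π), u x * (v x * ee (-k) x) := by
    simp only [fc_eq, mul_assoc]
  simp only [e1, e2]
  exact h2

/-- Fourier coefficients of a product: the convolution formula. -/
lemma fc_mul {f g : ℝ → ℂ} (hf : Sm f) (hg : Continuous g) (k : ℤ) :
    HasSum (fun l => fc f l * fc g (k - l)) (fc (fun x => f x * g x) k) := by
  have h := hasSum_fc_mul hf.summable_fc (fun l => (ee_sm l).cont) (M := 1)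
    (fun l x => (ee_norm l x).le) hf.hasSum hg k
  convert h using 3 with l
  rw [fc_eq, fc_eq]
  congr 2; funext x
  rw [show -(k - l) = l + -k by ring, ee_add]; ring

lemma fc_conj (f : ℝ → ℂ) (k : ℤ) : fc (fun x => (starRingEnd ℂ) (f x)) (-k)
    = (starRingEnd ℂ) (fc f k) := by
  rw [fc_eq, fc_eq, map_mul]
  congr 1
  · simp [Complex.conj_ofNat]
  · rw [intervalIntegral.intervalIntegral_eq_integral_uIoc,
      intervalIntegral.intervalIntegral_eq_integral_uIoc, ← Complex.conjCLE_apply, map_smul,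
      Complex.conjCLE_apply, ← integral_conj]
    congr 2; funext x
    rw [map_mul, ee, ee, ← Complex.exp_conj]
    simp

/-- Parseval's identity. -/
lemma parseval {f : ℝ → ℂ} (hf : Sm f) :
    HasSum (fun l => ‖fc f l‖ ^ 2) (1 / (2 * π) * ∫ x in (0:ℝ)..(2 * π), ‖f x‖ ^ 2) := by
  have h := fc_mul hf (Complex.continuous_conj.comp hf.cont) 0
  simp only [Function.comp_def, zero_sub, fc_conj, Complex.mul_conj, Complex.normSq_eq_norm_sq,
    fc_eq (fun x => ((‖f x‖ ^ 2 : ℝ) : ℂ)), neg_zero] at h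
  rw [← Complex.hasSum_ofReal]
  convert h using 1
  rw [Complex.ofReal_mul, ← intervalIntegral.integral_ofReal]
  simp [ee]

lemma fc_ee (k l : ℤ) : fc (ee k) l = if l = k then 1 else 0 := by
  have hpi : (2 * (π : ℂ)) ≠ 0 := by exact_mod_cast Real.two_pi_pos.ne'
  rw [fc_eq]
  simp only [← ee_add]
  split_ifs with h
  · subst h; simp [ee]; field_simp
  · have hne : ((k + -l : ℤ) : ℂ) ≠ 0 := by
      norm_cast; omega
    have := integral_exp_mul_complex (a := 0) (b := 2 * π) (c := Complex.I * ((k + -l : ℤ) : ℂ))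
      (mul_ne_zero Complex.I_ne_zero hne)
    unfold ee
    rw [this]
    have e := (ee_sm (k + -l)).2 0
    rw [zero_add, ee, ee] at e
    push_cast at e ⊢
    rw [e]; simp

lemma fc_sum {ι : Type*} (S : Finset ι) {f : ι → ℝ → ℂ} (hf : ∀ i ∈ S, Continuous (f i)) (k : ℤ) :
    fc (fun x => ∑ i ∈ S, f i x) k = ∑ i ∈ S, fc (f i) k := by
  simp only [fc_eq, Finset.sum_mul, ← Finset.mul_sum]
  rw [intervalIntegral.integral_finsetSum]
  exact fun i hi => ((hf i hi).mul (ee_sm _).cont).intervalIntegrable _ _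

/-- Parseval's identity for trigonometric polynomials. -/
lemma parseval_trig (S : Finset ℤ) (d : ℤ → ℂ) :
    ∫ x in (0:ℝ)..(2 * π), ‖∑ j ∈ S, d j * ee j x‖ ^ 2 = 2 * π * ∑ j ∈ S, ‖d j‖ ^ 2 := by
  have hsm : Sm (fun x => ∑ j ∈ S, d j * ee j x) := Sm.sum S fun j _ => (Sm.const _).mul (ee_sm j)
  have h := parseval hsm
  have hfc : ∀ l, fc (fun x => ∑ j ∈ S, d j * ee j x) l = if l ∈ S then d l else 0 := by
    intro l
    rw [fc_sum (f := fun j x => d j * ee j x) S fun j _ => continuous_const.mul (ee_sm j).cont]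
    simp [fc_smul, fc_ee]
  have h2 : HasSum (fun l => ‖fc (fun x => ∑ j ∈ S, d j * ee j x) l‖ ^ 2) (∑ j ∈ S, ‖d j‖ ^ 2) := by
    have h3 : HasSum (fun l => ‖fc (fun x => ∑ j ∈ S, d j * ee j x) l‖ ^ 2)
        (∑ l ∈ S, ‖fc (fun x => ∑ j ∈ S, d j * ee j x) l‖ ^ 2) :=
      hasSum_sum_of_ne_finset_zero (fun j hj => by simp [hfc, hj])
    rwa [Finset.sum_congr rfl fun j hj => by rw [hfc, if_pos hj]] at h3
  have := h.unique h2
  rw [← this]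
  have := Real.pi_pos
  field_simp

/-! ### Sobolev norms and tame product estimates -/

/-- The weighted modulus `⟨k⟩^s |c k|`, whose `ℓ²` norm is `seqNorm s c`. -/
def wt (s : ℝ) (c : ℤ → ℂ) (k : ℤ) : ℝ := jb k ^ s * ‖c k‖

lemma wt_nonneg (s : ℝ) (c : ℤ → ℂ) (k : ℤ) : 0 ≤ wt s c k := by
  have := jb_pos k; unfold wt; positivity

lemma wt_sq (s : ℝ) (c : ℤ → ℂ) (k : ℤ) : wt s c k ^ 2 = jb k ^ (2 * s) * ‖c k‖ ^ 2 := by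
  rw [wt, mul_pow, ← Real.rpow_natCast (jb k ^ s), ← Real.rpow_mul (jb_pos k).le]
  norm_num [mul_comm]

lemma sobNorm_eq (s : ℝ) (u : ℝ → ℂ) : sobNorm s u = √(∑' k, wt s (fc u) k ^ 2) := by
  simp only [sobNorm, wt_sq]

lemma Sm.wt_summable {f : ℝ → ℂ} (hf : Sm f) (s : ℝ) : Summable (fun k => wt s (fc f) k ^ 2) := by
  simp only [wt_sq]; exact hf.memHs s

lemma l2_le_add {h f g : ℤ → ℝ} (hh : ∀ k, 0 ≤ h k) (hf : ∀ k, 0 ≤ f k) (hg : ∀ k, 0 ≤ g k)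
    (hle : ∀ k, h k ≤ f k + g k) (sf : Summable fun k => f k ^ 2)
    (sg : Summable fun k => g k ^ 2) :
    (Summable fun k => h k ^ 2) ∧
      √(∑' k, h k ^ 2) ≤ √(∑' k, f k ^ 2) + √(∑' k, g k ^ 2) := by
  have m := Real.Lp_add_le_tsum_of_nonneg (p := 2) (by norm_num) hf hg
    (by simpa using sf) (by simpa using sg)
  simp only [Real.rpow_ofNat, ← Real.sqrt_eq_rpow] at m
  have hs : Summable fun k => h k ^ 2 :=
    Summable.of_nonneg_of_le (fun k => sq_nonneg _)
      (fun k => pow_le_pow_left₀ (hh k) (hle k) 2) m.1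
  refine ⟨hs, le_trans (Real.sqrt_le_sqrt ?_) m.2⟩
  exact hs.tsum_le_tsum (fun k => pow_le_pow_left₀ (hh k) (hle k) 2) m.1

lemma l2_mono {h f : ℤ → ℝ} (hh : ∀ k, 0 ≤ h k) (hle : ∀ k, h k ≤ f k)
    (sf : Summable fun k => f k ^ 2) : √(∑' k, h k ^ 2) ≤ √(∑' k, f k ^ 2) := by
  have hs : Summable fun k => h k ^ 2 :=
    Summable.of_nonneg_of_le (fun k => sq_nonneg _) (fun k => pow_le_pow_left₀ (hh k) (hle k) 2) sf
  exact Real.sqrt_le_sqrt (hs.tsum_le_tsum (fun k => pow_le_pow_left₀ (hh k) (hle k) 2) sf)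

lemma l2_smul (c : ℝ) (hc : 0 ≤ c) (f : ℤ → ℝ) :
    √(∑' k, (c * f k) ^ 2) = c * √(∑' k, f k ^ 2) := by
  simp only [mul_pow]
  rw [tsum_mul_left, Real.sqrt_mul (sq_nonneg c), Real.sqrt_sq hc]

lemma sob_nonneg (s : ℝ) (u : ℝ → ℂ) : 0 ≤ sobNorm s u := Real.sqrt_nonneg _

lemma sob_add {f g : ℝ → ℂ} (hf : Sm f) (hg : Sm g) (s : ℝ) :
    sobNorm s (fun x => f x + g x) ≤ sobNorm s f + sobNorm s g := by
  simp only [sobNorm_eq]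
  refine (l2_le_add (wt_nonneg _ _) (wt_nonneg _ _) (wt_nonneg _ _) (fun k => ?_)
    (hf.wt_summable s) (hg.wt_summable s)).2
  have := jb_pos k
  rw [wt, wt, wt, fc_add hf.cont hg.cont, ← mul_add]
  gcongr
  exact norm_add_le _ _

lemma sob_smul (f : ℝ → ℂ) (c : ℂ) (s : ℝ) :
    sobNorm s (fun x => c * f x) = ‖c‖ * sobNorm s f := by
  rw [sobNorm_eq, sobNorm_eq, ← l2_smul _ (norm_nonneg _)]
  congr 2; funext k
  rw [wt, wt, fc_smul, norm_mul]; ring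

lemma sob_mono {f : ℝ → ℂ} (hf : Sm f) {s t : ℝ} (hst : s ≤ t) : sobNorm s f ≤ sobNorm t f := by
  rw [sobNorm_eq, sobNorm_eq]
  refine l2_mono (wt_nonneg _ _) (fun k => ?_) (hf.wt_summable t)
  unfold wt
  gcongr
  exact jb_ge_one k

/-- Young's inequality `ℓ² * ℓ¹ ⊆ ℓ²` for nonnegative sequences on `ℤ`. -/
lemma young {F G : ℤ → ℝ} (hF : ∀ k, 0 ≤ F k) (hG : ∀ k, 0 ≤ G k)
    (sF : Summable fun k => F k ^ 2) (sG : Summable G) :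
    (∀ k, Summable fun l => F (k - l) * G l) ∧
    (Summable fun k => (∑' l, F (k - l) * G l) ^ 2) ∧
      √(∑' k, (∑' l, F (k - l) * G l) ^ 2) ≤ √(∑' k, F k ^ 2) * ∑' l, G l := by
  let e : ℤ × ℤ ≃ ℤ × ℤ :=
    ⟨fun p => (p.1 - p.2, p.2), fun p => (p.1 + p.2, p.2), fun p => by simp, fun p => by simp⟩
  have s1 : Summable fun p : ℤ × ℤ => F p.1 ^ 2 * G p.2 :=
    sF.mul_of_nonneg sG (fun k => sq_nonneg _) hG
  have s2 : Summable fun p : ℤ × ℤ => F (p.1 - p.2) ^ 2 * G p.2 := (e.summable_iff).2 s1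
  have t1 : ∑' p : ℤ × ℤ, F (p.1 - p.2) ^ 2 * G p.2 = (∑' k, F k ^ 2) * ∑' l, G l := by
    rw [sF.tsum_mul_tsum sG s1]
    exact e.tsum_eq (fun p : ℤ × ℤ => F p.1 ^ 2 * G p.2)
  have s3 : ∀ k, Summable fun l => F (k - l) ^ 2 * G l := fun k => s2.prod_factor k
  have cs : ∀ k, (Summable fun l => F (k - l) * G l) ∧
      (∑' l, F (k - l) * G l) ^ 2 ≤ (∑' l, F (k - l) ^ 2 * G l) * ∑' l, G l := by
    intro k
    have h1 : ∀ l, (F (k - l) * √(G l)) ^ 2 = F (k - l) ^ 2 * G l := fun l => by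
      rw [mul_pow, Real.sq_sqrt (hG l)]
    have h2 : ∀ l, F (k - l) * √(G l) * √(G l) = F (k - l) * G l := fun l => by
      rw [mul_assoc, Real.mul_self_sqrt (hG l)]
    have h3 : ∀ l, √(G l) ^ 2 = G l := fun l => Real.sq_sqrt (hG l)
    have h := Real.summable_and_inner_le_Lp_mul_Lq_tsum_of_nonneg (p := 2) (q := 2)
      Real.HolderConjugate.two_two
      (f := fun l => F (k - l) * √(G l)) (g := fun l => √(G l))
      (fun l => mul_nonneg (hF _) (Real.sqrt_nonneg _)) (fun l => Real.sqrt_nonneg _)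
      (by simp only [Real.rpow_ofNat, h1]; exact s3 k)
      (by simp only [Real.rpow_ofNat, h3]; exact sG)
    simp only [Real.rpow_ofNat, h1, h2, h3, ← Real.sqrt_eq_rpow] at h
    refine ⟨h.1, ?_⟩
    have n1 : 0 ≤ ∑' l, F (k - l) * G l := tsum_nonneg fun l => mul_nonneg (hF _) (hG _)
    have n2 : 0 ≤ ∑' l, F (k - l) ^ 2 * G l := tsum_nonneg fun l => mul_nonneg (sq_nonneg _) (hG _)
    calc _ ≤ (√(∑' l, F (k - l) ^ 2 * G l) * √(∑' l, G l)) ^ 2 := pow_le_pow_left₀ n1 h.2 2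
      _ = _ := by rw [mul_pow, Real.sq_sqrt n2, Real.sq_sqrt (tsum_nonneg hG)]
  have s4 : Summable fun k => (∑' l, F (k - l) ^ 2 * G l) * ∑' l, G l := s2.prod.mul_right _
  have s5 : Summable fun k => (∑' l, F (k - l) * G l) ^ 2 :=
    Summable.of_nonneg_of_le (fun k => sq_nonneg _) (fun k => (cs k).2) s4
  refine ⟨fun k => (cs k).1, s5, ?_⟩
  have : ∑' k, (∑' l, F (k - l) * G l) ^ 2 ≤ (∑' k, F k ^ 2) * (∑' l, G l) ^ 2 := by
    calc _ ≤ ∑' k, (∑' l, F (k - l) ^ 2 * G l) * ∑' l, G l := s5.tsum_le_tsum (fun k => (cs k).2) s4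
      _ = _ := by rw [tsum_mul_right, ← s2.tsum_prod, t1]; ring
  calc _ ≤ √((∑' k, F k ^ 2) * (∑' l, G l) ^ 2) := Real.sqrt_le_sqrt this
    _ = _ := by
      rw [Real.sqrt_mul (tsum_nonneg fun k => sq_nonneg _), Real.sqrt_sq (tsum_nonneg hG)]

lemma tsum_conv_comm (F G : ℤ → ℝ) (k : ℤ) : ∑' l, F l * G (k - l) = ∑' l, F (k - l) * G l := by
  rw [← (Equiv.subLeft k).tsum_eq (fun l => F l * G (k - l))]
  simp

/-- The constant of the embedding of `H¹` into the Wiener algebra. -/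
def cW : ℝ := √(∑' k : ℤ, (jb k ^ 2)⁻¹)

lemma cW_nonneg : 0 ≤ cW := Real.sqrt_nonneg _

/-- `H¹` embeds into the Wiener algebra, by the Cauchy–Schwarz inequality. -/
lemma wiener_seq {c : ℤ → ℂ} (h : memSeq 1 c) :
    (Summable fun k => ‖c k‖) ∧ ∑' k, ‖c k‖ ≤ cW * seqNorm 1 c := by
  have h1 : ∀ k, (jb k)⁻¹ * (jb k * ‖c k‖) = ‖c k‖ := fun k => by
    have := jb_pos k; field_simp
  have h2 : ∀ k, (jb k * ‖c k‖) ^ 2 = jb k ^ (2 * (1:ℝ)) * ‖c k‖ ^ 2 := fun k => by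
    rw [mul_pow]; norm_num
  have h3 := Real.summable_and_inner_le_Lp_mul_Lq_tsum_of_nonneg (p := 2) (q := 2)
      Real.HolderConjugate.two_two
      (f := fun k => (jb k)⁻¹) (g := fun k => jb k * ‖c k‖)
      (fun k => inv_nonneg.2 (jb_pos k).le) (fun k => mul_nonneg (jb_pos k).le (norm_nonneg _))
      (by simp only [Real.rpow_ofNat, inv_pow]; exact jb_summable)
      (by simp only [Real.rpow_ofNat, h2]; exact h)
  simp only [Real.rpow_ofNat, h1, h2, ← Real.sqrt_eq_rpow, inv_pow] at h3
  exact h3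

lemma Sm.wiener {f : ℝ → ℂ} (hf : Sm f) : ∑' k, ‖fc f k‖ ≤ cW * sobNorm 1 f :=
  (wiener_seq (hf.memHs 1)).2

lemma Sm.sup_le {f : ℝ → ℂ} (hf : Sm f) (x : ℝ) : ‖f x‖ ≤ cW * sobNorm 1 f := by
  refine le_trans ?_ hf.wiener
  rw [← (hf.hasSum x).tsum_eq]
  have h : ∀ k, ‖fc f k * ee k x‖ = ‖fc f k‖ := fun k => by rw [norm_mul, ee_norm, mul_one]
  refine (norm_tsum_le_tsum_norm ?_).trans ?_
  · simp only [h]; exact hf.summable_fc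
  · simp only [h]; exact le_rfl

lemma fc_mul_norm_le {f g : ℝ → ℂ} (hf : Sm f) (hg : Sm g) (k : ℤ) :
    (Summable fun l => ‖fc f (k - l)‖ * ‖fc g l‖) ∧
      ‖fc (fun x => f x * g x) k‖ ≤ ∑' l, ‖fc f (k - l)‖ * ‖fc g l‖ := by
  obtain ⟨M, hM⟩ := hf.bounded
  have s : Summable fun l => ‖fc f (k - l)‖ * ‖fc g l‖ :=
    Summable.of_nonneg_of_le (fun l => by positivity)
      (fun l => mul_le_mul_of_nonneg_right (fc_norm_le hM _) (norm_nonneg _))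
      (hg.summable_fc.mul_left M)
  have h := fc_mul hg hf.cont k
  simp only [mul_comm (g _)] at h
  refine ⟨s, ?_⟩
  rw [← h.tsum_eq]
  have e : ∀ l, ‖fc g l * fc f (k - l)‖ = ‖fc f (k - l)‖ * ‖fc g l‖ := fun l => by
    rw [norm_mul, mul_comm]
  refine (norm_tsum_le_tsum_norm ?_).trans ?_
  · simp only [e]; exact s
  · simp only [e]; exact le_rfl

/-- The weight is subadditive up to a factor: the larger of `⟨k - l⟩`, `⟨l⟩` is at least `⟨k⟩/2`. -/
lemma jb_peetre {s : ℝ} (hs : 0 ≤ s) (k l : ℤ) : jb k ^ s ≤ 2 ^ s * (jb (k - l) ^ s + jb l ^ s) := by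
  have h1 := jb_pos (k - l)
  have h2 := jb_pos l
  have h : jb k ≤ jb (k - l) + jb l := by
    refine max_le (by linarith [jb_ge_one l]) ?_
    have : (k : ℝ) = ((k - l : ℤ) : ℝ) + l := by push_cast; ring
    rw [this]
    exact (abs_add_le _ _).trans (add_le_add (abs_le_jb _) (abs_le_jb _))
  rcases le_total (jb (k - l)) (jb l) with hc | hc
  · calc jb k ^ s ≤ (2 * jb l) ^ s := Real.rpow_le_rpow (jb_pos k).le (by linarith) hs
      _ = 2 ^ s * jb l ^ s := Real.mul_rpow (by norm_num) h2.le
      _ ≤ _ := by gcongr; linarith [Real.rpow_pos_of_pos h1 s]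
  · calc jb k ^ s ≤ (2 * jb (k - l)) ^ s := Real.rpow_le_rpow (jb_pos k).le (by linarith) hs
      _ = 2 ^ s * jb (k - l) ^ s := Real.mul_rpow (by norm_num) h1.le
      _ ≤ _ := by gcongr; linarith [Real.rpow_pos_of_pos h2 s]

/-- Tame product estimate: the weight falls on one of the two factors, the other is measured in the
Wiener algebra. -/
lemma sob_mul {f g : ℝ → ℂ} (hf : Sm f) (hg : Sm g) {s : ℝ} (hs : 0 ≤ s) :
    sobNorm s (fun x => f x * g x) ≤
      2 ^ s * cW * (sobNorm s f * sobNorm 1 g + sobNorm 1 f * sobNorm s g) := by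
  have y1 := young (wt_nonneg s (fc f)) (fun k => norm_nonneg (fc g k)) (hf.wt_summable s)
    hg.summable_fc
  have y2 := young (wt_nonneg s (fc g)) (fun k => norm_nonneg (fc f k)) (hg.wt_summable s)
    hf.summable_fc
  have hc : (0:ℝ) ≤ 2 ^ s := by positivity
  have key := (l2_le_add (h := wt s (fc fun x => f x * g x))
    (f := fun k => 2 ^ s * ∑' l, wt s (fc f) (k - l) * ‖fc g l‖)
    (g := fun k => 2 ^ s * ∑' l, wt s (fc g) (k - l) * ‖fc f l‖)
    (wt_nonneg _ _)
    (fun k => mul_nonneg hc (tsum_nonneg fun l => mul_nonneg (wt_nonneg _ _ _) (norm_nonneg _)))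
    (fun k => mul_nonneg hc (tsum_nonneg fun l => mul_nonneg (wt_nonneg _ _ _) (norm_nonneg _)))
    (fun k => by
      obtain ⟨s1, h1⟩ := fc_mul_norm_le hf hg k
      have s3 : Summable fun l => ‖fc f (k - l)‖ * wt s (fc g) l := by
        have := (Equiv.subLeft k).summable_iff.2 (y2.1 k)
        refine this.congr fun l => ?_
        simp [mul_comm]
      have e3 : ∑' l, wt s (fc g) (k - l) * ‖fc f l‖ = ∑' l, ‖fc f (k - l)‖ * wt s (fc g) l := by
        rw [← tsum_conv_comm (fun l => ‖fc f l‖)]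
        simp only [mul_comm]
      rw [e3, ← mul_add, ← (y1.1 k).tsum_add s3, ← tsum_mul_left]
      have hk := jb_pos k
      calc wt s (fc fun x => f x * g x) k ≤ jb k ^ s * ∑' l, ‖fc f (k - l)‖ * ‖fc g l‖ := by
            unfold wt; gcongr
        _ = ∑' l, jb k ^ s * (‖fc f (k - l)‖ * ‖fc g l‖) := tsum_mul_left.symm
        _ ≤ _ := (s1.mul_left _).tsum_le_tsum (fun l => ?_) (((y1.1 k).add s3).mul_left _)
      calc jb k ^ s * (‖fc f (k - l)‖ * ‖fc g l‖)
          ≤ 2 ^ s * (jb (k - l) ^ s + jb l ^ s) * (‖fc f (k - l)‖ * ‖fc g l‖) := by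
            gcongr; exact jb_peetre hs k l
        _ = _ := by unfold wt; ring)
    (by simp only [mul_pow]; exact y1.2.1.mul_left _)
    (by simp only [mul_pow]; exact y2.2.1.mul_left _)).2
  rw [l2_smul _ hc, l2_smul _ hc, ← sobNorm_eq] at key
  have z1 := y1.2.2
  have z2 := y2.2.2
  rw [← sobNorm_eq] at z1 z2
  have w1 := mul_le_mul_of_nonneg_left hg.wiener (sob_nonneg s f)
  have w2 := mul_le_mul_of_nonneg_left hf.wiener (sob_nonneg s g)
  calc _ ≤ _ := key
    _ ≤ 2 ^ s * (sobNorm s f * (cW * sobNorm 1 g)) + 2 ^ s * (sobNorm s g * (cW * sobNorm 1 f)) := by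
        gcongr
        · exact z1.trans w1
        · exact z2.trans w2
    _ = _ := by ring

/-- `L²` norm of a product. It is linear in the `L²` norm of `g`, which `sob_mul` at `s = 0` is not. -/
lemma sob_mul_zero {f g : ℝ → ℂ} (hf : Sm f) (hg : Sm g) :
    sobNorm 0 (fun x => f x * g x) ≤ cW * sobNorm 1 f * sobNorm 0 g := by
  have y := young (wt_nonneg 0 (fc g)) (fun k => norm_nonneg (fc f k)) (hg.wt_summable 0)
    hf.summable_fc
  have key := l2_mono (h := wt 0 (fc fun x => f x * g x)) (wt_nonneg _ _)
    (fun k => by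
      have h1 := (fc_mul_norm_le hg hf k).2
      simp only [mul_comm (g _)] at h1
      simpa [wt] using h1) y.2.1
  rw [← sobNorm_eq] at key
  have z := y.2.2
  rw [← sobNorm_eq] at z
  have w := mul_le_mul_of_nonneg_left hf.wiener (sob_nonneg 0 g)
  calc _ ≤ _ := key.trans (z.trans w)
    _ = _ := by ring

lemma sob_deriv {f : ℝ → ℂ} (hf : Sm f) (s : ℝ) : sobNorm s (deriv f) ≤ sobNorm (s + 1) f := by
  rw [sobNorm_eq, sobNorm_eq]
  refine l2_mono (wt_nonneg _ _) (fun k => ?_) (hf.wt_summable _)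
  have := jb_pos k
  rw [wt, wt, fc_deriv hf, norm_mul, norm_mul, Complex.norm_I, one_mul, Complex.norm_intCast,
    Real.rpow_add this, Real.rpow_one, mul_assoc]
  gcongr
  exact abs_le_jb k

lemma sob_succ {f : ℝ → ℂ} (hf : Sm f) (s : ℝ) :
    sobNorm (s + 1) f ≤ sobNorm 0 f + sobNorm s (deriv f) := by
  simp only [sobNorm_eq]
  refine (l2_le_add (wt_nonneg _ _) (wt_nonneg _ _) (wt_nonneg _ _) (fun k => ?_)
    (hf.wt_summable _) (hf.deriv.wt_summable _)).2
  have := jb_pos k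
  by_cases hk : k = 0
  · subst hk
    have := wt_nonneg s (fc (deriv f)) 0
    simp only [wt, jb_zero, Real.one_rpow] at *
    linarith
  · refine le_trans (le_of_eq ?_) (le_add_of_nonneg_left (wt_nonneg _ _ _))
    rw [wt, wt, fc_deriv hf, norm_mul, norm_mul, Complex.norm_I, one_mul, Complex.norm_intCast,
      Real.rpow_add this, Real.rpow_one, jb_of_ne hk, mul_assoc]

/-! ### Asymptotics of the Bessel functions -/

/-- Differentiation under the integral sign for jointly continuous derivatives. -/
lemma hasDerivAt_param {E : Type*} [NormedAddCommGroup E] [NormedSpace ℝ E] [CompleteSpace E]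
    {f f' : ℝ → ℝ → E} (a b : ℝ)
    (hf : ∀ t, Continuous (f t)) (hf' : Continuous (Function.uncurry f'))
    (h : ∀ t x, HasDerivAt (fun t => f t x) (f' t x) t) (t₀ : ℝ) :
    HasDerivAt (fun t => ∫ x in a..b, f t x) (∫ x in a..b, f' t₀ x) t₀ := by
  obtain ⟨C, hC⟩ := ((isCompact_closedBall t₀ 1).prod (isCompact_uIcc (a := a) (b := b))
    ).exists_bound_of_continuousOn hf'.continuousOn
  exact (intervalIntegral.hasDerivAt_integral_of_dominated_loc_of_deriv_le
    (bound := fun _ => C) (F' := f') (Metric.closedBall_mem_nhds t₀ one_pos)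
    (Filter.Eventually.of_forall fun t => (hf t).aestronglyMeasurable)
    ((hf t₀).intervalIntegrable _ _)
    (hf'.comp (Continuous.prodMk_right t₀)).aestronglyMeasurable
    (ae_of_all _ fun x hx t ht => hC (t, x) ⟨ht, Set.uIoc_subset_uIcc hx⟩)
    (by simp) (ae_of_all _ fun x _ t _ => h t x)).2

/-- The Bessel function of integer order, through Bessel's integral. -/
def Jn (n : ℤ) (θ : ℝ) : ℝ :=
  1 / (2 * π) * ∫ φ in (0:ℝ)..(2 * π), Real.cos (n * φ - θ * Real.sin φ)

lemma J1_eq (θ : ℝ) : J1 θ = Jn 1 θ := by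
  have h : ∀ φ : ℝ, Complex.exp (Complex.I * (θ : ℂ) * (Real.sin φ : ℂ)) *
      Complex.exp (-Complex.I * (φ : ℂ)) = Complex.exp (((θ * Real.sin φ - φ : ℝ) : ℂ) * Complex.I) := by
    intro φ; rw [← Complex.exp_add]; congr 1; push_cast; ring
  have hc : Continuous fun φ : ℝ => Complex.exp (((θ * Real.sin φ - φ : ℝ) : ℂ) * Complex.I) := by
    fun_prop
  unfold J1 Jn
  simp only [h]
  have h2 : (1 / (2 * (π : ℂ))) = ((1 / (2 * π) : ℝ) : ℂ) := by push_cast; rfl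
  rw [h2, Complex.re_ofReal_mul]
  congr 1
  have := Complex.reCLM.intervalIntegral_comp_comm (hc.intervalIntegrable (μ := volume) 0 (2 * π))
  simp only [Complex.reCLM_apply] at this
  rw [← this]
  congr 1; funext φ
  rw [Complex.exp_ofReal_mul_I_re, ← Real.cos_neg]
  push_cast; ring_nf

lemma Jn_neg (n : ℤ) (θ : ℝ) : Jn n (-θ) = Jn (-n) θ := by
  unfold Jn
  congr 2; funext φ
  rw [← Real.cos_neg]
  push_cast; ring_nf

lemma Jn_abs_le (n : ℤ) (θ : ℝ) : |Jn n θ| ≤ 1 := by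
  have h2 := Real.two_pi_pos
  have := intervalIntegral.norm_integral_le_of_norm_le_const (a := 0) (b := 2 * π)
    (f := fun φ => Real.cos (n * φ - θ * Real.sin φ)) (C := 1) (fun x _ => Real.abs_cos_le_one _)
  rw [sub_zero, abs_of_pos h2, one_mul, Real.norm_eq_abs] at this
  rw [Jn, abs_mul, abs_of_pos (by positivity : 0 < 1 / (2 * π)), one_div, inv_mul_le_iff₀ h2, mul_one]
  exact this

lemma Jn_hasDerivAt (n : ℤ) (θ : ℝ) :
    HasDerivAt (Jn n) ((Jn (n - 1) θ - Jn (n + 1) θ) / 2) θ := by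
  have h := (hasDerivAt_param (f := fun θ φ => Real.cos (n * φ - θ * Real.sin φ))
    (f' := fun θ φ => Real.sin φ * Real.sin (n * φ - θ * Real.sin φ)) 0 (2 * π)
    (fun t => by fun_prop) (by unfold Function.uncurry; fun_prop)
    (fun t x => by
      have h1 : HasDerivAt (fun t : ℝ => n * x - t * Real.sin x) (-Real.sin x) t := by
        simpa using ((hasDerivAt_id t).mul_const (Real.sin x)).const_sub ((n : ℝ) * x)
      exact HasDerivAt.congr_deriv h1.cos (by ring)) θ).const_mul (1 / (2 * π))
  refine HasDerivAt.congr_deriv (f := Jn n) h ?_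
  unfold Jn
  rw [← mul_sub, ← intervalIntegral.integral_sub, mul_div_assoc]
  · congr 1
    rw [div_eq_mul_inv, ← intervalIntegral.integral_mul_const]
    congr 1; funext φ
    push_cast
    have e1 : ((n:ℝ) - 1) * φ - θ * Real.sin φ = (n * φ - θ * Real.sin φ) - φ := by ring
    have e2 : ((n:ℝ) + 1) * φ - θ * Real.sin φ = (n * φ - θ * Real.sin φ) + φ := by ring
    rw [e1, e2]; generalize (n:ℝ) * φ - θ * Real.sin φ = X
    rw [Real.cos_sub, Real.cos_add]; ring
  · exact Continuous.intervalIntegrable (by fun_prop) _ _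
  · exact Continuous.intervalIntegrable (by fun_prop) _ _

lemma Jn_deriv (n : ℤ) : deriv (Jn n) = fun θ => (Jn (n - 1) θ - Jn (n + 1) θ) / 2 :=
  funext fun θ => (Jn_hasDerivAt n θ).deriv

lemma Jn_contDiff (n : ℤ) : ContDiff ℝ (⊤ : ℕ∞) (Jn n) := by
  rw [contDiff_infty]
  intro m
  induction m generalizing n with
  | zero => exact contDiff_zero.2 (Differentiable.continuous (𝕜 := ℝ) fun θ => (Jn_hasDerivAt n θ).differentiableAt)
  | succ m ih =>
    push_cast
    rw [contDiff_succ_iff_deriv]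
    refine ⟨fun θ => (Jn_hasDerivAt n θ).differentiableAt, by simp, ?_⟩
    rw [Jn_deriv]
    exact ((ih (n - 1)).sub (ih (n + 1))).div_const 2

/-- The three-term recurrence: `(n - θ cos φ) cos(nφ - θ sin φ)` is an exact derivative. -/
lemma Jn_rec (n : ℤ) (θ : ℝ) : 2 * n * Jn n θ = θ * (Jn (n - 1) θ + Jn (n + 1) θ) := by
  have h : ∫ φ in (0:ℝ)..(2 * π), (n - θ * Real.cos φ) * Real.cos (n * φ - θ * Real.sin φ) = 0 := by
    rw [intervalIntegral.integral_eq_sub_of_hasDerivAt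
      (f := fun φ => Real.sin (n * φ - θ * Real.sin φ))]
    · simp only [Real.sin_two_pi, Real.sin_zero, mul_zero, sub_zero]
      have := Real.sin_int_mul_pi (2 * n)
      push_cast at this
      rw [show (n : ℝ) * (2 * π) = 2 * n * π by ring, this]
    · intro φ _
      have h1 : HasDerivAt (fun φ : ℝ => n * φ - θ * Real.sin φ) (n - θ * Real.cos φ) φ := by
        exact HasDerivAt.congr_deriv (((hasDerivAt_id φ).const_mul (n : ℝ)).sub
          ((Real.hasDerivAt_sin φ).const_mul θ)) (by simp)
      exact HasDerivAt.congr_deriv h1.sin (by ring)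
    · exact Continuous.intervalIntegrable (by fun_prop) _ _
  have h3 : 2 * n * Jn n θ - θ * (Jn (n - 1) θ + Jn (n + 1) θ) = 1 / (2 * π) * (2 *
      ∫ φ in (0:ℝ)..(2 * π), (n - θ * Real.cos φ) * Real.cos (n * φ - θ * Real.sin φ)) := by
    unfold Jn
    rw [← mul_add, ← intervalIntegral.integral_add, mul_left_comm, mul_left_comm θ, ← mul_sub,
      ← intervalIntegral.integral_const_mul, ← intervalIntegral.integral_const_mul,
      ← intervalIntegral.integral_const_mul, ← intervalIntegral.integral_sub]
    · congr 2; funext φ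
      push_cast
      have e1 : ((n:ℝ) - 1) * φ - θ * Real.sin φ = (n * φ - θ * Real.sin φ) - φ := by ring
      have e2 : ((n:ℝ) + 1) * φ - θ * Real.sin φ = (n * φ - θ * Real.sin φ) + φ := by ring
      rw [e1, e2]; generalize (n:ℝ) * φ - θ * Real.sin φ = X
      rw [Real.cos_sub, Real.cos_add]; ring
    all_goals exact Continuous.intervalIntegrable (by fun_prop) _ _
  rw [h] at h3
  linarith

/-- A function whose derivative is dominated by that of `B` varies less than `B`. -/
lemma norm_sub_le_of_deriv {P P' : ℝ → ℂ} {B B' : ℝ → ℝ} {a b : ℝ} (hab : a ≤ b)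
    (hP : ∀ t ∈ Set.Icc a b, HasDerivAt P (P' t) t) (hB : ∀ t ∈ Set.Icc a b, HasDerivAt B (B' t) t)
    (h : ∀ t ∈ Set.Icc a b, ‖P' t‖ ≤ B' t) : ‖P b - P a‖ ≤ B b - B a := by
  refine image_norm_le_of_norm_deriv_right_le_deriv_boundary' (a := a) (b := b)
    (f := fun t => P t - P a) (f' := P') (B := fun t => B t - B a) (B' := B')
    (fun t ht => ((hP t ht).continuousAt.sub continuousAt_const).continuousWithinAt)
    (fun t ht => ((hP t ⟨ht.1, ht.2.le⟩).sub_const _).hasDerivWithinAt) (by simp)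
    (fun t ht => ((hB t ht).continuousAt.sub continuousAt_const).continuousWithinAt)
    (fun t ht => ((hB t ⟨ht.1, ht.2.le⟩).sub_const _).hasDerivWithinAt)
    (fun t ht => h t ⟨ht.1, ht.2.le⟩) (Set.right_mem_Icc.2 hab)

/-- The derivative of `√θ J_n(θ)`. -/
def dw (n : ℤ) (θ : ℝ) : ℝ :=
  √θ * ((Jn (n - 1) θ - Jn (n + 1) θ) / 2) + Jn n θ / (2 * √θ)

/-- The complex amplitude of `√θ J_n(θ)`, that is `(w - i w') e^{-iθ}` for `w = √θ J_n(θ)`. -/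
def amp (n : ℤ) (θ : ℝ) : ℂ :=
  (((√θ * Jn n θ : ℝ) : ℂ) - Complex.I * (dw n θ : ℂ)) * Complex.exp (-Complex.I * (θ : ℂ))

lemma w_hasDerivAt (n : ℤ) {θ : ℝ} (hθ : 0 < θ) :
    HasDerivAt (fun θ => √θ * Jn n θ) (dw n θ) θ := by
  have := (Real.hasDerivAt_sqrt hθ.ne').mul (Jn_hasDerivAt n θ)
  refine HasDerivAt.congr_deriv this ?_
  unfold dw; ring

/-- Bessel's equation in the form `w'' = -(1 - (n² - 1/4)/θ²) w`. -/
lemma dw_hasDerivAt (n : ℤ) {θ : ℝ} (hθ : 0 < θ) :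
    HasDerivAt (dw n) (-(1 - ((n : ℝ) ^ 2 - 1 / 4) / θ ^ 2) * (√θ * Jn n θ)) θ := by
  have hs := Real.sqrt_pos.2 hθ
  have h0 := Real.hasDerivAt_sqrt hθ.ne'
  have h1 := h0.mul
    (((Jn_hasDerivAt (n - 1) θ).sub (Jn_hasDerivAt (n + 1) θ)).div_const 2)
  have h2 := (Jn_hasDerivAt n θ).div (h0.const_mul 2) (by positivity)
  have h3 := h1.add h2
  refine HasDerivAt.congr_deriv (f := dw n) h3 ?_
  have r1 := Jn_rec (n - 1) θ
  have r2 := Jn_rec (n + 1) θ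
  have r0 := Jn_rec n θ
  have e1 : n - 1 + 1 = n := by ring
  have e2 : n + 1 - 1 = n := by ring
  simp only [e1, e2] at r1 r2
  simp only [e1, e2, Pi.sub_apply]
  push_cast at r1 r2
  generalize Jn (n - 1 - 1) θ = x at *
  generalize Jn (n + 1 + 1) θ = y at *
  generalize Jn (n - 1) θ = p at *
  generalize Jn (n + 1) θ = q at *
  generalize Jn n θ = z at *
  obtain ⟨r, hr, rfl⟩ : ∃ r, 0 < r ∧ θ = r ^ 2 := ⟨√θ, hs, (Real.sq_sqrt hθ.le).symm⟩
  rw [Real.sqrt_sq hr.le]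
  have hr' := hr.ne'
  have e3 : (x - z) / 2 - (z - y) / 2
      = ((n - 1) * p / r ^ 2 + (n + 1) * q / r ^ 2 - 2 * z) := by
    field_simp
    linear_combination (-1 : ℝ) * r1 - r2
  have e4 : n * ((p + q) / 2) = n ^ 2 * z / r ^ 2 := by
    field_simp
    linear_combination (-(n : ℝ)) * r0
  have e5 : ((n:ℝ) - 1) * p / r ^ 2 + (n + 1) * q / r ^ 2 - 2 * z
      = 2 * n ^ 2 * z / r ^ 4 - (p - q) / r ^ 2 - 2 * z := by
    have : ((n:ℝ) - 1) * p / r ^ 2 + (n + 1) * q / r ^ 2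
      = 2 * (n * ((p + q) / 2)) / r ^ 2 - (p - q) / r ^ 2 := by field_simp; ring
    rw [this, e4]; field_simp
  rw [e3, e5]
  field_simp
  ring

/-- By Bessel's equation, the derivative of the amplitude is of order `θ⁻²` times `√θ J_n(θ)`. -/
lemma amp_hasDerivAt (n : ℤ) {θ : ℝ} (hθ : 0 < θ) :
    HasDerivAt (amp n) (-Complex.I * ((((n : ℝ) ^ 2 - 1 / 4) / θ ^ 2 * (√θ * Jn n θ) : ℝ) : ℂ)
      * Complex.exp (-Complex.I * (θ : ℂ))) θ := by
  have h1 := (w_hasDerivAt n hθ).ofReal_comp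
  have h2 := (dw_hasDerivAt n hθ).ofReal_comp
  have h3 : HasDerivAt (fun θ : ℝ => Complex.exp (-Complex.I * (θ : ℂ)))
      (Complex.exp (-Complex.I * (θ : ℂ)) * (-Complex.I * 1)) θ :=
    (((hasDerivAt_id θ).ofReal_comp).const_mul (-Complex.I)).cexp
  have h4 := (h1.sub (h2.const_mul Complex.I)).mul h3
  refine HasDerivAt.congr_deriv h4 ?_
  rw [Pi.sub_apply]
  push_cast
  linear_combination ((dw n θ : ℂ) * Complex.exp (-Complex.I * (θ : ℂ))) * Complex.I_sq

lemma amp_re (n : ℤ) (θ : ℝ) : ((√θ * Jn n θ : ℝ) : ℂ) =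
    (amp n θ * Complex.exp (Complex.I * θ) + (starRingEnd ℂ) (amp n θ)
      * Complex.exp (-Complex.I * θ)) / 2 := by
  have e : Complex.exp (-Complex.I * θ) * Complex.exp (Complex.I * θ) = 1 := by
    rw [← Complex.exp_add]; simp
  unfold amp
  rw [map_mul, map_sub, map_mul, Complex.conj_ofReal, Complex.conj_ofReal, Complex.conj_I,
    ← Complex.exp_conj, map_mul, map_neg, Complex.conj_I, Complex.conj_ofReal, neg_neg]
  linear_combination (-((√θ * Jn n θ : ℝ) : ℂ)) * e

lemma exp_norm (θ : ℝ) : ‖Complex.exp (-Complex.I * (θ : ℂ))‖ = 1 := by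
  rw [Complex.norm_exp]; simp

lemma exp_norm' (θ : ℝ) : ‖Complex.exp (Complex.I * (θ : ℂ))‖ = 1 := by
  rw [Complex.norm_exp]; simp

/-- The amplitude converges at infinity at rate `1/θ`. Two integrations of its derivative: the first,
with the trivial bound `|J_n| ≤ 1`, shows that it is bounded, the second gives the rate. -/
lemma amp_limit (n : ℤ) {θ₀ : ℝ} (h0 : 0 < θ₀) :
    ∃ (L : ℂ) (K : ℝ), 0 ≤ K ∧ ∀ θ, θ₀ ≤ θ → ‖amp n θ - L‖ ≤ K / θ := by
  set κ : ℝ := |(n : ℝ) ^ 2 - 1 / 4| with hκ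
  have hκ0 : 0 ≤ κ := abs_nonneg _
  have nP : ∀ θ, 0 < θ → ‖-Complex.I * ((((n : ℝ) ^ 2 - 1 / 4) / θ ^ 2 * (√θ * Jn n θ) : ℝ) : ℂ)
      * Complex.exp (-Complex.I * (θ : ℂ))‖ = κ / θ ^ 2 * |√θ * Jn n θ| := by
    intro θ hθ
    rw [norm_mul, exp_norm, mul_one, norm_mul, norm_neg, Complex.norm_I, one_mul,
      Complex.norm_real, Real.norm_eq_abs, abs_mul, abs_div, abs_of_pos (by positivity : 0 < θ ^ 2)]
  -- `|J_n| ≤ 1` makes the derivative of size `κ θ^{-3/2}`, which is integrable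
  have b1 : ∀ θ, θ₀ ≤ θ → ‖amp n θ‖ ≤ ‖amp n θ₀‖ + 2 * κ / √θ₀ := by
    intro θ hθ
    have h := norm_sub_le_of_deriv (P := amp n) (B := fun t => -(2 * κ) * (√t)⁻¹)
      (B' := fun t => κ / t ^ 2 * √t) hθ
      (fun t ht => amp_hasDerivAt n (h0.trans_le ht.1))
      (fun t ht => by
        have ht0 := h0.trans_le ht.1
        have hs := Real.sqrt_pos.2 ht0
        have := ((Real.hasDerivAt_sqrt ht0.ne').inv hs.ne').const_mul (-(2 * κ))
        refine HasDerivAt.congr_deriv this ?_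
        have e := Real.sq_sqrt ht0.le
        have e2 : t ^ 2 = √t ^ 4 := by rw [show 4 = 2 * 2 by norm_num, pow_mul, e]
        rw [e2]; field_simp)
      (fun t ht => by
        have ht0 := h0.trans_le ht.1
        rw [nP t ht0, abs_mul, abs_of_nonneg (Real.sqrt_nonneg t)]
        gcongr
        exact mul_le_of_le_one_right (Real.sqrt_nonneg t) (Jn_abs_le n t))
    have hs : 0 < √θ := Real.sqrt_pos.2 (h0.trans_le hθ)
    have h5 : 0 ≤ 2 * κ * (√θ)⁻¹ := by positivity
    have h6 : ‖amp n θ‖ ≤ ‖amp n θ₀‖ + ‖amp n θ - amp n θ₀‖ := by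
      simpa using norm_add_le (amp n θ₀) (amp n θ - amp n θ₀)
    rw [div_eq_mul_inv]
    linarith
  set M : ℝ := ‖amp n θ₀‖ + 2 * κ / √θ₀
  have hM : 0 ≤ M := (norm_nonneg _).trans (b1 θ₀ le_rfl)
  have wb : ∀ θ, θ₀ ≤ θ → |√θ * Jn n θ| ≤ M := by
    intro θ hθ
    have h := amp_re n θ
    have h2 : ‖((√θ * Jn n θ : ℝ) : ℂ)‖ ≤ ‖amp n θ‖ := by
      rw [h, norm_div]
      have := norm_add_le (amp n θ * Complex.exp (Complex.I * θ)) ((starRingEnd ℂ) (amp n θ)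
        * Complex.exp (-Complex.I * θ))
      rw [norm_mul, norm_mul, exp_norm, exp_norm', Complex.norm_conj] at this
      rw [div_le_iff₀ (by norm_num)]
      norm_num
      norm_num at this
      linarith
    rw [Complex.norm_real, Real.norm_eq_abs] at h2
    exact h2.trans (b1 θ hθ)
  -- with `√θ J_n` now known to be bounded, the derivative is of size `κ M θ^{-2}`
  have b2 : ∀ s t, θ₀ ≤ s → s ≤ t → ‖amp n t - amp n s‖ ≤ κ * M / s := by
    intro s t hs hst
    have h := norm_sub_le_of_deriv (P := amp n) (B := fun t => -(κ * M) * t⁻¹)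
      (B' := fun t => κ / t ^ 2 * M) hst
      (fun u hu => amp_hasDerivAt n (h0.trans_le (hs.trans hu.1)))
      (fun u hu => by
        have hu0 := h0.trans_le (hs.trans hu.1)
        refine HasDerivAt.congr_deriv ((hasDerivAt_inv hu0.ne').const_mul (-(κ * M))) ?_
        field_simp)
      (fun u hu => by
        have hu0 := h0.trans_le (hs.trans hu.1)
        rw [nP u hu0]
        gcongr
        exact wb u (hs.trans hu.1))
    have : 0 ≤ κ * M * t⁻¹ := by
      have := h0.trans_le (hs.trans hst)
      positivity
    rw [div_eq_mul_inv]
    linarith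
  have hc : CauchySeq fun t => amp n (max t θ₀) := by
    refine cauchySeq_of_le_tendsto_0 (fun N => 2 * (κ * M / max N θ₀)) (fun s t N hs ht => ?_) ?_
    · have c1 := b2 (max N θ₀) (max s θ₀) (le_max_right _ _) (max_le_max_right _ hs)
      have c2 := b2 (max N θ₀) (max t θ₀) (le_max_right _ _) (max_le_max_right _ ht)
      rw [← dist_eq_norm] at c1 c2
      rw [dist_comm] at c2
      have := dist_triangle (amp n (max s θ₀)) (amp n (max N θ₀)) (amp n (max t θ₀))
      linarith
    · have : Filter.Tendsto (fun N => max N θ₀) Filter.atTop Filter.atTop :=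
        Filter.tendsto_atTop_mono (fun N => le_max_left N θ₀) Filter.tendsto_id
      simpa using (this.const_div_atTop (κ * M)).const_mul 2
  obtain ⟨L, hL⟩ := cauchySeq_tendsto_of_complete hc
  refine ⟨L, κ * M, mul_nonneg hκ0 hM, fun θ hθ => ?_⟩
  have h7 : Filter.Tendsto (fun t => ‖amp n θ - amp n (max t θ₀)‖) Filter.atTop
      (nhds ‖amp n θ - L‖) := (tendsto_const_nhds.sub hL).norm
  refine le_of_tendsto h7 ?_
  filter_upwards [Filter.eventually_ge_atTop θ] with t ht
  rw [norm_sub_rev]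
  exact b2 θ _ hθ (ht.trans (le_max_left _ _))

/-- Leading-order asymptotics of the Bessel functions. -/
lemma Jn_asymp (n : ℤ) {θ₀ : ℝ} (h0 : 0 < θ₀) :
    ∃ (L : ℂ) (K : ℝ), 0 ≤ K ∧ ∀ θ, θ₀ ≤ θ → ‖((√θ * Jn n θ : ℝ) : ℂ) -
      (L * Complex.exp (Complex.I * θ) + (starRingEnd ℂ) L * Complex.exp (-Complex.I * θ))‖
        ≤ K / θ := by
  obtain ⟨L, K, hK, h⟩ := amp_limit n h0
  refine ⟨L / 2, K, hK, fun θ hθ => ?_⟩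
  rw [amp_re, map_div₀, Complex.conj_ofNat]
  have e : (amp n θ * Complex.exp (Complex.I * θ) + (starRingEnd ℂ) (amp n θ)
      * Complex.exp (-Complex.I * θ)) / 2 - (L / 2 * Complex.exp (Complex.I * θ)
        + (starRingEnd ℂ) L / 2 * Complex.exp (-Complex.I * θ))
      = ((amp n θ - L) * Complex.exp (Complex.I * θ) + (starRingEnd ℂ) (amp n θ - L)
        * Complex.exp (-Complex.I * θ)) / 2 := by
    rw [map_sub]; ring
  rw [e, norm_div]
  have := norm_add_le ((amp n θ - L) * Complex.exp (Complex.I * θ))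
    ((starRingEnd ℂ) (amp n θ - L) * Complex.exp (-Complex.I * θ))
  rw [norm_mul, norm_mul, exp_norm, exp_norm', Complex.norm_conj] at this
  rw [div_le_iff₀ (by norm_num)]
  norm_num
  norm_num at this
  linarith [h θ hθ]

/-- The asymptotics at `jA`, uniform in the nonzero integer `j` and in `A` bounded below. Negative
`j` are covered by `J_n(-θ) = J_{-n}(θ)`. -/
lemma Jn_modes (n : ℤ) {A₀ : ℝ} (h0 : 0 < A₀) :
    ∃ (μ ν : ℤ → ℂ) (M K : ℝ), 0 ≤ M ∧ 0 ≤ K ∧ (∀ j, ‖μ j‖ ≤ M ∧ ‖ν j‖ ≤ M) ∧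
      ∀ j : ℤ, j ≠ 0 → ∀ A : ℝ, A₀ ≤ A → ‖((√A * √(jb j) * Jn n (j * A) : ℝ) : ℂ) -
        (μ j * Complex.exp (Complex.I * j * A) + ν j * Complex.exp (-Complex.I * j * A))‖
          ≤ K / jb j := by
  obtain ⟨L, K, hK, h⟩ := Jn_asymp n h0
  obtain ⟨L', K', hK', h'⟩ := Jn_asymp (-n) h0
  refine ⟨fun j => if 0 < j then L else (starRingEnd ℂ) L',
    fun j => if 0 < j then (starRingEnd ℂ) L else L', max ‖L‖ ‖L'‖, max K K' / A₀,
    by positivity, by positivity, fun j => ?_, fun j hj A hA => ?_⟩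
  · dsimp only; split_ifs <;> simp
  · have hA0 := h0.trans_le hA
    have hj1 := jb_pos j
    have hge : A₀ ≤ jb j * A := by nlinarith [jb_ge_one j]
    have fin : ∀ K₁, 0 ≤ K₁ → K₁ ≤ max K K' → K₁ / (jb j * A) ≤ max K K' / A₀ / jb j := by
      intro K₁ _ hK₁
      rw [div_div, mul_comm (jb j)]
      gcongr
    have hsq : √(jb j * A) = √A * √(jb j) := by rw [Real.sqrt_mul hj1.le, mul_comm]
    by_cases hp : 0 < j
    · have hjj : jb j = j := by rw [jb_of_ne hj, abs_of_pos (by exact_mod_cast hp)]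
      have e := h _ hge
      rw [hsq] at e
      simp only [if_pos hp]
      refine le_trans (le_of_eq ?_) (e.trans (fin K hK (le_max_left _ _)))
      rw [hjj]; push_cast
      simp only [mul_assoc]
    · have hn : j < 0 := lt_of_le_of_ne (not_lt.1 hp) hj
      have hjj : jb j = -j := by rw [jb_of_ne hj, abs_of_neg (by exact_mod_cast hn)]
      have e := h' _ hge
      rw [hsq, ← Jn_neg] at e
      simp only [if_neg hp]
      refine le_trans (le_of_eq ?_) (e.trans (fin K' hK' (le_max_right _ _)))
      rw [hjj]; push_cast
      simp only [neg_mul, mul_neg, neg_neg, mul_assoc]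
      rw [add_comm]

/-! ### Finite superpositions of modes and their `L²` bound -/

/-- A real function viewed as a complex one. -/
def cx (a : ℝ → ℝ) (x : ℝ) : ℂ := (a x : ℂ)

lemma sm_cx {a : ℝ → ℝ} (ha : smoothPer a) : Sm (cx a) :=
  ⟨Complex.ofRealCLM.contDiff.comp ha.1, fun x => by simp [cx, ha.2 x]⟩

lemma smoothPer.diff {a : ℝ → ℝ} (ha : smoothPer a) : Differentiable ℝ a :=
  ha.1.differentiable (by simp)

lemma deriv_cx {a : ℝ → ℝ} (ha : smoothPer a) (x : ℝ) : deriv (cx a) x = ((deriv a x : ℝ) : ℂ) :=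
  ((ha.diff x).hasDerivAt.ofReal_comp).deriv

lemma pairNorm_eq (s : ℝ) (a b : ℝ → ℝ) : pairNorm s a b = sobNorm s (cx a) + sobNorm s (cx b) := rfl

lemma pair_nonneg (s : ℝ) (a b : ℝ → ℝ) : 0 ≤ pairNorm s a b :=
  add_nonneg (sob_nonneg _ _) (sob_nonneg _ _)

lemma pair_mono {a b : ℝ → ℝ} (ha : smoothPer a) (hb : smoothPer b) {s t : ℝ} (hst : s ≤ t) :
    pairNorm s a b ≤ pairNorm t a b :=
  add_le_add (sob_mono (sm_cx ha) hst) (sob_mono (sm_cx hb) hst)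

/-- The smallness threshold: it makes `|a| ≤ A/2` and `|a'| + |b'| ≤ 1/2`, and the norm of the pair in
`H³` at most `1`. -/
def dl (A : ℝ) : ℝ := min 1 (min (A / (2 * (cW + 1))) (1 / (2 * (cW + 1))))

lemma dl_pos {A : ℝ} (hA : 0 < A) : 0 < dl A := by
  have := cW_nonneg
  unfold dl
  refine lt_min one_pos (lt_min ?_ ?_) <;> positivity

/-- Smooth periodic pairs below the smallness threshold. -/
def Adm (A : ℝ) (a b : ℝ → ℝ) : Prop := smoothPer a ∧ smoothPer b ∧ pairNorm 3 a b < dl A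

lemma Adm.small {A : ℝ} {a b : ℝ → ℝ} (h : Adm A a b) :
    (∀ x, |a x| ≤ A / 2) ∧ (∀ x, |deriv a x| + |deriv b x| ≤ 1 / 2) := by
  obtain ⟨ha, hb, hs⟩ := h
  have hc := cW_nonneg
  have h2 : pairNorm 3 a b ≤ A / (2 * (cW + 1)) :=
    hs.le.trans ((min_le_right _ _).trans (min_le_left _ _))
  have h3 : pairNorm 3 a b ≤ 1 / (2 * (cW + 1)) :=
    hs.le.trans ((min_le_right _ _).trans (min_le_right _ _))
  have hp := pair_nonneg 3 a b
  have k2 : cW * pairNorm 3 a b ≤ A / 2 := by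
    rw [le_div_iff₀ (by positivity)] at h2
    nlinarith
  have k3 : cW * pairNorm 3 a b ≤ 1 / 2 := by
    rw [le_div_iff₀ (by positivity)] at h3
    nlinarith
  refine ⟨fun x => ?_, fun x => ?_⟩
  · have h := (sm_cx ha).sup_le x
    have : sobNorm 1 (cx a) ≤ pairNorm 3 a b :=
      (sob_mono (sm_cx ha) (by norm_num)).trans (le_add_of_nonneg_right (sob_nonneg _ _))
    rw [cx, Complex.norm_real, Real.norm_eq_abs] at h
    exact h.trans ((mul_le_mul_of_nonneg_left this hc).trans k2)
  · have e1 := (sm_cx ha).deriv.sup_le x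
    have e2 := (sm_cx hb).deriv.sup_le x
    have d1 := (sob_deriv (sm_cx ha) 1).trans (sob_mono (sm_cx ha) (by norm_num : (1:ℝ) + 1 ≤ 3))
    have d2 := (sob_deriv (sm_cx hb) 1).trans (sob_mono (sm_cx hb) (by norm_num : (1:ℝ) + 1 ≤ 3))
    rw [deriv_cx ‹_›, Complex.norm_real, Real.norm_eq_abs] at e1 e2
    rw [pairNorm_eq] at k3
    nlinarith

/-- The mode `J_n(j(A + a(x))) e^{ij(x + b(x))}`. -/
def md (A : ℝ) (n : ℤ) (a b : ℝ → ℝ) (j : ℤ) (x : ℝ) : ℂ :=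
  (Jn n (j * (A + a x)) : ℂ) * ee j (x + b x)

/-- The finite superposition `∑_{j ∈ S} c_j J_n(jA(x)) e^{ijB(x)}`. -/
def F (A : ℝ) (n : ℤ) (a b : ℝ → ℝ) (S : Finset ℤ) (c : ℤ → ℂ) (x : ℝ) : ℂ :=
  ∑ j ∈ S, c j * md A n a b j x

/-- The multiplier by `j`. -/
def DD (c : ℤ → ℂ) (j : ℤ) : ℂ := j * c j

/-- The `ℓ²` norm with weight `⟨j⟩^r` over a finite set of frequencies. -/
def sn (r : ℝ) (S : Finset ℤ) (c : ℤ → ℂ) : ℝ := √(∑ j ∈ S, wt r c j ^ 2)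

lemma sn_nonneg (r : ℝ) (S : Finset ℤ) (c : ℤ → ℂ) : 0 ≤ sn r S c := Real.sqrt_nonneg _

lemma sn_sq (r : ℝ) (S : Finset ℤ) (c : ℤ → ℂ) : sn r S c ^ 2 = ∑ j ∈ S, wt r c j ^ 2 :=
  Real.sq_sqrt (Finset.sum_nonneg fun _ _ => sq_nonneg _)

lemma wt_mono {r t : ℝ} (h : r ≤ t) (c : ℤ → ℂ) (j : ℤ) : wt r c j ≤ wt t c j :=
  mul_le_mul_of_nonneg_right (Real.rpow_le_rpow_of_exponent_le (jb_ge_one j) h) (norm_nonneg _)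

lemma sn_mono {r t : ℝ} (h : r ≤ t) (S : Finset ℤ) (c : ℤ → ℂ) : sn r S c ≤ sn t S c := by
  refine Real.sqrt_le_sqrt (Finset.sum_le_sum fun j _ => ?_)
  have := wt_nonneg r c j
  have := wt_mono h c j
  gcongr

lemma wt_DD (r : ℝ) (c : ℤ → ℂ) (j : ℤ) : wt r (DD c) j ≤ wt (r + 1) c j := by
  unfold wt DD
  rw [norm_mul, Complex.norm_intCast, Real.rpow_add_one (jb_pos j).ne', mul_assoc]
  have := abs_le_jb j
  have := jb_pos j
  gcongr

lemma sn_DD (r : ℝ) (S : Finset ℤ) (c : ℤ → ℂ) : sn r S (DD c) ≤ sn (r + 1) S c := by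
  refine Real.sqrt_le_sqrt (Finset.sum_le_sum fun j _ => ?_)
  have := wt_nonneg r (DD c) j
  have := wt_DD r c j
  gcongr

lemma DD_zero (c : ℤ → ℂ) : DD c 0 = 0 := by simp [DD]

lemma md_sm (A : ℝ) (n : ℤ) {a b : ℝ → ℝ} (ha : smoothPer a) (hb : smoothPer b) (j : ℤ) :
    Sm (md A n a b j) := by
  have e := ee_sm j
  refine ⟨ContDiff.mul (Complex.ofRealCLM.contDiff.comp ((Jn_contDiff n).comp
    (contDiff_const.mul (contDiff_const.add ha.1)))) (e.1.comp (contDiff_id.add hb.1)), fun x => ?_⟩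
  have : x + 2 * π + b x = x + b x + 2 * π := by ring
  unfold md
  rw [ha.2, hb.2, this, e.2]

lemma md_norm (A : ℝ) (n : ℤ) (a b : ℝ → ℝ) (j : ℤ) (x : ℝ) : ‖md A n a b j x‖ ≤ 1 := by
  unfold md
  rw [norm_mul, ee_norm, mul_one, Complex.norm_real]
  exact Jn_abs_le _ _

lemma F_sm (A : ℝ) (n : ℤ) {a b : ℝ → ℝ} (ha : smoothPer a) (hb : smoothPer b) (S : Finset ℤ)
    (c : ℤ → ℂ) : Sm (F A n a b S c) :=
  Sm.sum S fun j _ => (Sm.const (c j)).mul (md_sm A n ha hb j)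

/-- The derivative of a mode, from `J_n' = (J_{n-1} - J_{n+1})/2`. -/
lemma md_hasDerivAt (A : ℝ) (n : ℤ) {a b : ℝ → ℝ} (ha : smoothPer a) (hb : smoothPer b) (j : ℤ)
    (x : ℝ) : HasDerivAt (md A n a b j)
      (deriv (cx a) x * (j * ((1 / 2) * (md A (n - 1) a b j x - md A (n + 1) a b j x)))
        + (1 + deriv (cx b) x) * (Complex.I * (j * md A n a b j x))) x := by
  have h1 := ((Jn_hasDerivAt n (j * (A + a x))).comp x
    (((ha.diff x).hasDerivAt.const_add A).const_mul (j : ℝ))).ofReal_comp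
  have h2 := (ee_hasDerivAt j (x + b x)).scomp x ((hasDerivAt_id x).add (hb.diff x).hasDerivAt)
  refine HasDerivAt.congr_deriv (f := md A n a b j) (h1.mul h2) ?_
  rw [deriv_cx ha, deriv_cx hb]
  simp only [md, Function.comp, Complex.real_smul]
  push_cast
  ring

/-- The derivative of `F` is a combination of the fields `F_{n-1}`, `F_n`, `F_{n+1}` for the multiplied
sequence `DD c`, with coefficients `a'` and `1 + b'`. -/
lemma F_deriv (A : ℝ) (n : ℤ) {a b : ℝ → ℝ} (ha : smoothPer a) (hb : smoothPer b) (S : Finset ℤ)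
    (c : ℤ → ℂ) : deriv (F A n a b S c) = fun x =>
      deriv (cx a) x * ((1 / 2) * (F A (n - 1) a b S (DD c) x + (-1) * F A (n + 1) a b S (DD c) x))
        + (Complex.I * F A n a b S (DD c) x
          + deriv (cx b) x * (Complex.I * F A n a b S (DD c) x)) := by
  funext x
  have := HasDerivAt.fun_sum (u := S) fun j _ => (md_hasDerivAt A n ha hb j x).const_mul (c j)
  rw [show F A n a b S c = fun y => ∑ j ∈ S, c j * md A n a b j y from rfl, this.deriv]
  simp only [F, DD, Finset.mul_sum, ← Finset.sum_add_distrib]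
  refine Finset.sum_congr rfl fun j _ => ?_
  ring

lemma sob_zero_sq {f : ℝ → ℂ} (hf : Sm f) :
    sobNorm 0 f ^ 2 = 1 / (2 * π) * ∫ x in (0:ℝ)..(2 * π), ‖f x‖ ^ 2 := by
  rw [← (parseval hf).tsum_eq, sobNorm, Real.sq_sqrt (tsum_nonneg fun _ => by
    have := jb_pos ‹_›; positivity)]
  simp

/-- Composition with a diffeomorphism of the circle whose derivative is at least `1/2`. -/
lemma integral_comp_le {G h : ℝ → ℝ} (hG : Continuous G) (hG0 : ∀ x, 0 ≤ G x)
    (hp : Function.Periodic G (2 * π)) (hh : smoothPer h) (hd : ∀ x, |deriv h x| ≤ 1 / 2) :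
    ∫ x in (0:ℝ)..(2 * π), G (x + h x) ≤ 2 * ∫ x in (0:ℝ)..(2 * π), G x := by
  have hc : Continuous (deriv h) := hh.1.continuous_deriv (by simp)
  have hhc := hh.1.continuous
  have h1 := intervalIntegral.integral_comp_mul_deriv (a := 0) (b := 2 * π) (g := G)
    (f := fun x => x + h x) (f' := fun x => 1 + deriv h x)
    (fun x _ => (hasDerivAt_id x).add (hh.diff x).hasDerivAt) (by fun_prop) hG
  have h2 : h (2 * π) = h 0 := by simpa using hh.2 0
  have h3 := hp.intervalIntegral_add_eq (0 + h 0) 0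
  have e : 2 * π + h (2 * π) = 0 + h 0 + 2 * π := by rw [h2]; ring
  rw [e, h3, zero_add] at h1
  rw [← h1, ← intervalIntegral.integral_const_mul]
  refine intervalIntegral.integral_mono_on Real.two_pi_pos.le
    (Continuous.intervalIntegrable (by fun_prop) _ _)
    (Continuous.intervalIntegrable (by simp only [Function.comp]; fun_prop) _ _) fun x _ => ?_
  have := hG0 (x + h x)
  have := (abs_le.1 (hd x)).1
  simp only [Function.comp]
  nlinarith

lemma jb_sum_le (S : Finset ℤ) : ∑ j ∈ S, (jb j ^ 2)⁻¹ ≤ cW ^ 2 := by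
  rw [cW, Real.sq_sqrt (tsum_nonneg fun j => by have := jb_pos j; positivity)]
  exact jb_summable.sum_le_tsum S fun j _ => by have := jb_pos j; positivity

/-- A half wave `∑ c_j ⟨j⟩^{-1/2} μ_j e^{ij(x + h(x))}` in `L²`: after a change of variables it is a
trigonometric polynomial. -/
lemma wave_bound {μ : ℤ → ℂ} {M : ℝ} (hM : ∀ j, ‖μ j‖ ≤ M) {h : ℝ → ℝ} (hh : smoothPer h)
    (hd : ∀ x, |deriv h x| ≤ 1 / 2) (S : Finset ℤ) (c : ℤ → ℂ) :
    ∫ x in (0:ℝ)..(2 * π), ‖∑ j ∈ S, c j * ((√(jb j))⁻¹ : ℝ) * μ j * ee j (x + h x)‖ ^ 2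
      ≤ 2 * (2 * π * (M ^ 2 * sn (-1 / 2) S c ^ 2)) := by
  have hS : Sm fun x => ∑ j ∈ S, c j * ((√(jb j))⁻¹ : ℝ) * μ j * ee j x :=
    Sm.sum S fun j _ => (Sm.const _).mul (ee_sm j)
  have h1 := integral_comp_le (G := fun x => ‖∑ j ∈ S, c j * ((√(jb j))⁻¹ : ℝ) * μ j * ee j x‖ ^ 2)
    (hS.cont.norm.pow 2) (fun x => sq_nonneg _) (fun x => by
      have := hS.2 x
      simp only at this ⊢
      rw [this]) hh hd
  refine h1.trans ?_
  rw [parseval_trig, sn_sq, Finset.mul_sum S _ (M ^ 2)]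
  have := Real.pi_pos
  gcongr with j _
  have hj := jb_pos j
  rw [norm_mul, norm_mul, Complex.norm_real, Real.norm_of_nonneg (by positivity), wt]
  have e : jb j ^ (-1 / 2 : ℝ) = (√(jb j))⁻¹ := by
    rw [Real.sqrt_eq_rpow, ← Real.rpow_neg hj.le]; norm_num
  rw [e, ← mul_pow]
  have := hM j
  have : 0 ≤ M := (norm_nonneg _).trans this
  calc (‖c j‖ * (√(jb j))⁻¹ * ‖μ j‖) ^ 2 ≤ (‖c j‖ * (√(jb j))⁻¹ * M) ^ 2 := by gcongr
    _ = _ := by ring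

/-- The basic `L²` bound, with a gain of half a derivative: at high frequency `J_n(jA) e^{ijB}` is a sum
of two waves with phases `j(B ± A)`, up to an absolutely summable remainder. -/
lemma F_L2 {A : ℝ} (hA : 0 < A) (n : ℤ) : ∃ C : ℝ, 0 ≤ C ∧ ∀ a b, Adm A a b → ∀ S c, c 0 = 0 →
    sobNorm 0 (F A n a b S c) ≤ C * sn (-1 / 2) S c := by
  obtain ⟨μ, ν, M, K, hM, hK, hμν, hJ⟩ := Jn_modes n (half_pos hA)
  refine ⟨√((6 / A) * (4 * M ^ 2 + K ^ 2 * cW ^ 2)), Real.sqrt_nonneg _, fun a b hab S c hc => ?_⟩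
  obtain ⟨ha, hb, -⟩ := id hab
  obtain ⟨sa, sd⟩ := hab.small
  set T := sn (-1 / 2) S c with hT
  have hT0 : 0 ≤ T := sn_nonneg _ _ _
  have sp : smoothPer fun x => b x + (A + a x) :=
    ⟨hb.1.add (contDiff_const.add ha.1), fun x => by simp only [ha.2 x, hb.2 x]⟩
  have sm : smoothPer fun x => b x - (A + a x) :=
    ⟨hb.1.sub (contDiff_const.add ha.1), fun x => by simp only [ha.2 x, hb.2 x]⟩
  have dp : ∀ x, |deriv (fun x => b x + (A + a x)) x| ≤ 1 / 2 := fun x => by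
    rw [((hb.diff x).hasDerivAt.fun_add ((ha.diff x).hasDerivAt.const_add A)).deriv]
    exact (abs_add_le _ _).trans (by linarith [sd x])
  have dm : ∀ x, |deriv (fun x => b x - (A + a x)) x| ≤ 1 / 2 := fun x => by
    rw [((hb.diff x).hasDerivAt.fun_sub ((ha.diff x).hasDerivAt.const_add A)).deriv]
    exact (abs_sub _ _).trans (by linarith [sd x])
  have w1 := wave_bound (fun j => (hμν j).1) sp dp S c
  have w2 := wave_bound (fun j => (hμν j).2) sm dm S c
  set P : ℝ → ℂ := fun x => ∑ j ∈ S, c j * ((√(jb j))⁻¹ : ℝ) * μ j * ee j (x + (b x + (A + a x)))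
    with hP
  set Q : ℝ → ℂ := fun x => ∑ j ∈ S, c j * ((√(jb j))⁻¹ : ℝ) * ν j * ee j (x + (b x - (A + a x)))
    with hQ
  -- `R` bounds the remainder of order `1/j` of the asymptotics, by the Cauchy–Schwarz inequality
  set R : ℝ := ∑ j ∈ S, wt (-1 / 2) c j * (K * (jb j)⁻¹) with hR
  have hR2 : R ^ 2 ≤ K ^ 2 * cW ^ 2 * T ^ 2 := by
    refine (Finset.sum_mul_sq_le_sq_mul_sq S _ _).trans ?_
    rw [hT, sn_sq, mul_comm]
    refine mul_le_mul_of_nonneg_right ?_ (Finset.sum_nonneg fun _ _ => sq_nonneg _)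
    simp only [mul_pow, ← Finset.mul_sum, inv_pow]
    exact mul_le_mul_of_nonneg_left (jb_sum_le S) (sq_nonneg _)
  have key : ∀ x, ‖(√(A + a x) : ℂ) * F A n a b S c x - (P x + Q x)‖ ≤ R := by
    intro x
    rw [F, Finset.mul_sum, hP, hQ]
    simp only
    rw [← Finset.sum_add_distrib, ← Finset.sum_sub_distrib]
    refine (norm_sum_le _ _).trans (Finset.sum_le_sum fun j _ => ?_)
    by_cases hj : j = 0
    · subst hj; simp [hc, wt]
    have hAx : A / 2 ≤ A + a x := by linarith [(abs_le.1 (sa x)).1]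
    have hb0 := jb_pos j
    have hs := Real.sqrt_pos.2 hb0
    have e : jb j ^ (-1 / 2 : ℝ) = (√(jb j))⁻¹ := by
      rw [Real.sqrt_eq_rpow, ← Real.rpow_neg hb0.le]; norm_num
    have e1 : ee j (x + (b x + (A + a x))) = Complex.exp (Complex.I * j * ((A + a x : ℝ) : ℂ))
        * ee j (x + b x) := by
      simp only [ee, ← Complex.exp_add]; congr 1; push_cast; ring
    have e2 : ee j (x + (b x - (A + a x))) = Complex.exp (-Complex.I * j * ((A + a x : ℝ) : ℂ))
        * ee j (x + b x) := by
      simp only [ee, ← Complex.exp_add]; congr 1; push_cast; ring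
    have hsC : ((√(jb j) : ℝ) : ℂ) ≠ 0 := by exact_mod_cast hs.ne'
    have e3 : (√(A + a x) : ℂ) * (c j * md A n a b j x) -
        (c j * ((√(jb j))⁻¹ : ℝ) * μ j * ee j (x + (b x + (A + a x)))
        + c j * ((√(jb j))⁻¹ : ℝ) * ν j * ee j (x + (b x - (A + a x))))
        = c j * ((√(jb j))⁻¹ : ℝ) * (((√(A + a x) * √(jb j) * Jn n (j * (A + a x)) : ℝ) : ℂ) -
        (μ j * Complex.exp (Complex.I * j * ((A + a x : ℝ) : ℂ))
          + ν j * Complex.exp (-Complex.I * j * ((A + a x : ℝ) : ℂ)))) * ee j (x + b x) := by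
      rw [e1, e2, md]
      push_cast
      field_simp
    rw [e3, norm_mul, ee_norm, mul_one, norm_mul, norm_mul, Complex.norm_real,
      Real.norm_of_nonneg (by positivity), wt, e]
    have := hJ j hj (A + a x) hAx
    rw [div_eq_mul_inv] at this
    calc _ ≤ ‖c j‖ * (√(jb j))⁻¹ * (K * (jb j)⁻¹) := by gcongr
      _ = _ := by ring
  have hPc : Continuous P := by
    have := ha.1.continuous; have := hb.1.continuous; have := fun j => (ee_sm j).cont
    rw [hP]; fun_prop
  have hQc : Continuous Q := by
    have := ha.1.continuous; have := hb.1.continuous; have := fun j => (ee_sm j).cont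
    rw [hQ]; fun_prop
  have hF := F_sm A n ha hb S c
  have pt : ∀ x, ‖F A n a b S c x‖ ^ 2 ≤ (6 / A) * (‖P x‖ ^ 2 + ‖Q x‖ ^ 2 + R ^ 2) := by
    intro x
    have hAx : A / 2 ≤ A + a x := by linarith [(abs_le.1 (sa x)).1]
    have k := key x
    have t1 : ‖(√(A + a x) : ℂ) * F A n a b S c x‖ ≤ ‖P x‖ + ‖Q x‖ + R := by
      have := norm_add_le ((√(A + a x) : ℂ) * F A n a b S c x - (P x + Q x)) (P x + Q x)
      rw [sub_add_cancel] at this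
      linarith [norm_add_le (P x) (Q x)]
    rw [norm_mul, Complex.norm_real, Real.norm_of_nonneg (Real.sqrt_nonneg _)] at t1
    have t2 : (A + a x) * ‖F A n a b S c x‖ ^ 2 ≤ (‖P x‖ + ‖Q x‖ + R) ^ 2 := by
      have : (√(A + a x) * ‖F A n a b S c x‖) ^ 2 ≤ (‖P x‖ + ‖Q x‖ + R) ^ 2 := by gcongr
      rwa [mul_pow, Real.sq_sqrt (by linarith)] at this
    have t3 : (‖P x‖ + ‖Q x‖ + R) ^ 2 ≤ 3 * (‖P x‖ ^ 2 + ‖Q x‖ ^ 2 + R ^ 2) := by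
      nlinarith [sq_nonneg (‖P x‖ - ‖Q x‖), sq_nonneg (‖P x‖ - R), sq_nonneg (‖Q x‖ - R)]
    have t4 : A / 2 * ‖F A n a b S c x‖ ^ 2 ≤ 3 * (‖P x‖ ^ 2 + ‖Q x‖ ^ 2 + R ^ 2) :=
      (mul_le_mul_of_nonneg_right hAx (sq_nonneg _)).trans (t2.trans t3)
    rw [div_mul_eq_mul_div, le_div_iff₀ hA]
    linarith
  have int : ∫ x in (0:ℝ)..(2 * π), ‖F A n a b S c x‖ ^ 2
      ≤ (6 / A) * (2 * (2 * π * (M ^ 2 * T ^ 2)) + 2 * (2 * π * (M ^ 2 * T ^ 2)) + 2 * π * R ^ 2) := by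
    have hFc := hF.cont
    have i1 : IntervalIntegrable (fun x => ‖P x‖ ^ 2) volume 0 (2 * π) :=
      (hPc.norm.pow 2).intervalIntegrable _ _
    have i2 : IntervalIntegrable (fun x => ‖Q x‖ ^ 2) volume 0 (2 * π) :=
      (hQc.norm.pow 2).intervalIntegrable _ _
    have i3 : IntervalIntegrable (fun _ : ℝ => R ^ 2) volume 0 (2 * π) := intervalIntegrable_const
    refine (intervalIntegral.integral_mono_on Real.two_pi_pos.le
      ((hFc.norm.pow 2).intervalIntegrable _ _) (((i1.add i2).add i3).const_mul _)
      fun x _ => pt x).trans ?_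
    rw [intervalIntegral.integral_const_mul, intervalIntegral.integral_add (i1.add i2) i3,
      intervalIntegral.integral_add i1 i2, intervalIntegral.integral_const, sub_zero, smul_eq_mul]
    gcongr
  refine le_of_sq_le_sq ?_ (by positivity)
  rw [sob_zero_sq hF, mul_pow, Real.sq_sqrt (by positivity), one_div,
    inv_mul_le_iff₀ Real.two_pi_pos]
  refine int.trans ?_
  have hp := Real.pi_pos
  calc _ ≤ (6 / A) * (2 * (2 * π * (M ^ 2 * T ^ 2)) + 2 * (2 * π * (M ^ 2 * T ^ 2))
        + 2 * π * (K ^ 2 * cW ^ 2 * T ^ 2)) := by gcongr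
    _ = _ := by ring

/-! ### Bounds in `H^s` for `0 ≤ s ≤ 3` -/

/-- The three fields that enter the derivatives of `F`, measured together in `H^r`. -/
def WW (A : ℝ) (n : ℤ) (a b : ℝ → ℝ) (S : Finset ℤ) (c : ℤ → ℂ) (r : ℝ) : ℝ :=
  sobNorm r (F A (n - 1) a b S (DD c)) + sobNorm r (F A n a b S (DD c))
    + sobNorm r (F A (n + 1) a b S (DD c))

lemma WW_nonneg (A : ℝ) (n : ℤ) (a b : ℝ → ℝ) (S : Finset ℤ) (c : ℤ → ℂ) (r : ℝ) :
    0 ≤ WW A n a b S c r :=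
  add_nonneg (add_nonneg (sob_nonneg _ _) (sob_nonneg _ _)) (sob_nonneg _ _)

lemma WW_mono (A : ℝ) (n : ℤ) {a b : ℝ → ℝ} (ha : smoothPer a) (hb : smoothPer b) (S : Finset ℤ)
    (c : ℤ → ℂ) {r t : ℝ} (h : r ≤ t) : WW A n a b S c r ≤ WW A n a b S c t :=
  add_le_add (add_le_add (sob_mono (F_sm A _ ha hb S _) h) (sob_mono (F_sm A _ ha hb S _) h))
    (sob_mono (F_sm A _ ha hb S _) h)

/-- The half difference of `F_{n-1}` and `F_{n+1}`, which comes from `J_n' = (J_{n-1} - J_{n+1})/2`. -/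
def XX (A : ℝ) (n : ℤ) (a b : ℝ → ℝ) (S : Finset ℤ) (c : ℤ → ℂ) (x : ℝ) : ℂ :=
  (1 / 2) * (F A (n - 1) a b S (DD c) x + (-1) * F A (n + 1) a b S (DD c) x)

/-- The derivative of the exponentials with respect to their phase. -/
def YY (A : ℝ) (n : ℤ) (a b : ℝ → ℝ) (S : Finset ℤ) (c : ℤ → ℂ) (x : ℝ) : ℂ :=
  Complex.I * F A n a b S (DD c) x

lemma XX_sm (A : ℝ) (n : ℤ) {a b : ℝ → ℝ} (ha : smoothPer a) (hb : smoothPer b) (S : Finset ℤ)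
    (c : ℤ → ℂ) : Sm (XX A n a b S c) :=
  (Sm.const _).mul ((F_sm A _ ha hb S _).add ((Sm.const _).mul (F_sm A _ ha hb S _)))

lemma YY_sm (A : ℝ) (n : ℤ) {a b : ℝ → ℝ} (ha : smoothPer a) (hb : smoothPer b) (S : Finset ℤ)
    (c : ℤ → ℂ) : Sm (YY A n a b S c) :=
  (Sm.const _).mul (F_sm A _ ha hb S _)

lemma XX_le (A : ℝ) (n : ℤ) {a b : ℝ → ℝ} (ha : smoothPer a) (hb : smoothPer b) (S : Finset ℤ)
    (c : ℤ → ℂ) (r : ℝ) : sobNorm r (XX A n a b S c) ≤ WW A n a b S c r := by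
  have h1 := sob_smul (fun x => F A (n - 1) a b S (DD c) x + (-1) * F A (n + 1) a b S (DD c) x)
    (1 / 2) r
  have h2 := sob_add (F_sm A (n - 1) ha hb S (DD c))
    ((Sm.const (-1)).mul (F_sm A (n + 1) ha hb S (DD c))) r
  have h3 := sob_smul (F A (n + 1) a b S (DD c)) (-1) r
  have e : ‖(1 / 2 : ℂ)‖ = 1 / 2 := by norm_num
  rw [e] at h1
  rw [norm_neg, norm_one, one_mul] at h3
  rw [h3] at h2
  have := sob_nonneg r (F A (n - 1) a b S (DD c))
  have := sob_nonneg r (F A n a b S (DD c))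
  have := sob_nonneg r (F A (n + 1) a b S (DD c))
  unfold WW XX
  linarith

lemma YY_le (A : ℝ) (n : ℤ) (a b : ℝ → ℝ) (S : Finset ℤ)
    (c : ℤ → ℂ) (r : ℝ) : sobNorm r (YY A n a b S c) ≤ WW A n a b S c r := by
  have h1 := sob_smul (F A n a b S (DD c)) Complex.I r
  rw [Complex.norm_I, one_mul] at h1
  have := sob_nonneg r (F A (n - 1) a b S (DD c))
  have := sob_nonneg r (F A (n + 1) a b S (DD c))
  unfold WW YY
  linarith

/-- Tame product estimate for `pX + qY`, with `p`, `q` the coefficients. -/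
lemma tame_pair (A : ℝ) (n : ℤ) {a b : ℝ → ℝ} (ha : smoothPer a) (hb : smoothPer b) (S : Finset ℤ)
    (c : ℤ → ℂ) {p q : ℝ → ℂ} (hp : Sm p) (hq : Sm q) {s : ℝ} (hs : 0 ≤ s) :
    sobNorm s (fun x => p x * XX A n a b S c x) + sobNorm s (fun x => q x * YY A n a b S c x) ≤
      2 ^ s * cW * ((sobNorm s p + sobNorm s q) * WW A n a b S c 1 +
        (sobNorm 1 p + sobNorm 1 q) * WW A n a b S c s) := by
  have h1 := sob_mul hp (XX_sm A n ha hb S c) hs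
  have h2 := sob_mul hq (YY_sm A n ha hb S c) hs
  have x1 := XX_le A n ha hb S c 1
  have xs := XX_le A n ha hb S c s
  have y1 := YY_le A n a b S c 1
  have ys := YY_le A n a b S c s
  have hc : 0 ≤ 2 ^ s * cW := mul_nonneg (by positivity) cW_nonneg
  have n1 := sob_nonneg s p
  have n2 := sob_nonneg s q
  have n3 := sob_nonneg 1 p
  have n4 := sob_nonneg 1 q
  calc _ ≤ 2 ^ s * cW * (sobNorm s p * WW A n a b S c 1 + sobNorm 1 p * WW A n a b S c s)
        + 2 ^ s * cW * (sobNorm s q * WW A n a b S c 1 + sobNorm 1 q * WW A n a b S c s) := by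
        refine add_le_add (h1.trans ?_) (h2.trans ?_) <;> gcongr
    _ = _ := by ring

lemma pair_deriv {a b : ℝ → ℝ} (ha : smoothPer a) (hb : smoothPer b) (s : ℝ) :
    sobNorm s (deriv (cx a)) + sobNorm s (deriv (cx b)) ≤ pairNorm (s + 1) a b :=
  add_le_add (sob_deriv (sm_cx ha) s) (sob_deriv (sm_cx hb) s)

lemma Adm.le_one {A : ℝ} {a b : ℝ → ℝ} (h : Adm A a b) {s : ℝ} (hs : s ≤ 3) : pairNorm s a b ≤ 1 :=
  (pair_mono h.1 h.2.1 hs).trans (h.2.2.le.trans (min_le_left _ _))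

lemma F_deriv_sob (A : ℝ) (n : ℤ) {a b : ℝ → ℝ} (ha : smoothPer a) (hb : smoothPer b) (S : Finset ℤ)
    (c : ℤ → ℂ) (s : ℝ) : sobNorm s (deriv (F A n a b S c)) ≤
      sobNorm s (fun x => deriv (cx a) x * XX A n a b S c x) + (WW A n a b S c s +
        sobNorm s (fun x => deriv (cx b) x * YY A n a b S c x)) := by
  rw [F_deriv A n ha hb S c]
  have sX := (sm_cx ha).deriv.mul (XX_sm A n ha hb S c)
  have sY := (sm_cx hb).deriv.mul (YY_sm A n ha hb S c)
  have h1 := sob_add sX ((YY_sm A n ha hb S c).add sY) s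
  have h2 := sob_add (YY_sm A n ha hb S c) sY s
  have h3 := YY_le A n a b S c s
  unfold XX YY at *
  linarith

/-- One more derivative on `F` costs one application of `D`, up to tame terms. -/
lemma F_step {A : ℝ} (n : ℤ) {a b : ℝ → ℝ} (h : Adm A a b) (S : Finset ℤ) (c : ℤ → ℂ) {s : ℝ}
    (hs : 0 ≤ s) : sobNorm (s + 1) (F A n a b S c) ≤ sobNorm 0 (F A n a b S c) + WW A n a b S c s +
      2 ^ s * cW * (pairNorm (s + 1) a b * WW A n a b S c 1 + WW A n a b S c s) := by
  obtain ⟨ha, hb, -⟩ := id h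
  have h1 := sob_succ (F_sm A n ha hb S c) s
  have h2 := F_deriv_sob A n ha hb S c s
  have h3 := tame_pair A n ha hb S c (sm_cx ha).deriv (sm_cx hb).deriv hs
  have p1 := pair_deriv ha hb s
  have p2 := (pair_deriv ha hb 1).trans (h.le_one (by norm_num))
  have w1 := WW_nonneg A n a b S c 1
  have ws := WW_nonneg A n a b S c s
  have hc : 0 ≤ 2 ^ s * cW := mul_nonneg (by positivity) cW_nonneg
  have h4 : 2 ^ s * cW * ((sobNorm s (deriv (cx a)) + sobNorm s (deriv (cx b))) * WW A n a b S c 1 +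
        (sobNorm 1 (deriv (cx a)) + sobNorm 1 (deriv (cx b))) * WW A n a b S c s)
      ≤ 2 ^ s * cW * (pairNorm (s + 1) a b * WW A n a b S c 1 + 1 * WW A n a b S c s) := by
    gcongr
  rw [one_mul] at h4
  linarith

/-- The case `s = 0` of `F_step`, with the product estimate of `sob_mul_zero`, which does not involve
`WW` at regularity `1`. -/
lemma F_step_zero {A : ℝ} (n : ℤ) {a b : ℝ → ℝ} (h : Adm A a b) (S : Finset ℤ) (c : ℤ → ℂ) :
    sobNorm 1 (F A n a b S c) ≤ sobNorm 0 (F A n a b S c) + (1 + cW) * WW A n a b S c 0 := by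
  obtain ⟨ha, hb, -⟩ := id h
  have h1 := sob_succ (F_sm A n ha hb S c) 0
  have h2 := F_deriv_sob A n ha hb S c 0
  have m1 := sob_mul_zero (sm_cx ha).deriv (XX_sm A n ha hb S c)
  have m2 := sob_mul_zero (sm_cx hb).deriv (YY_sm A n ha hb S c)
  have x0 := XX_le A n ha hb S c 0
  have y0 := YY_le A n a b S c 0
  have p2 := (pair_deriv ha hb 1).trans (h.le_one (by norm_num))
  have ws := WW_nonneg A n a b S c 0
  have n3 := sob_nonneg 1 (deriv (cx a))
  have n4 := sob_nonneg 1 (deriv (cx b))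
  have hc := cW_nonneg
  have h3 : cW * sobNorm 1 (deriv (cx a)) * sobNorm 0 (XX A n a b S c)
      + cW * sobNorm 1 (deriv (cx b)) * sobNorm 0 (YY A n a b S c) ≤ cW * WW A n a b S c 0 := by
    calc _ ≤ cW * sobNorm 1 (deriv (cx a)) * WW A n a b S c 0
          + cW * sobNorm 1 (deriv (cx b)) * WW A n a b S c 0 := by gcongr
      _ = cW * (sobNorm 1 (deriv (cx a)) + sobNorm 1 (deriv (cx b))) * WW A n a b S c 0 := by ring
      _ ≤ cW * 1 * WW A n a b S c 0 := by gcongr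
      _ = _ := by ring
  rw [zero_add] at h1
  linarith

/-- The bound with a gain of half a derivative in `H^s`, uniform in admissible pairs. -/
def G (A s : ℝ) : Prop := ∀ n, ∃ C : ℝ, 0 ≤ C ∧ ∀ a b, Adm A a b → ∀ S c, c 0 = 0 →
  sobNorm s (F A n a b S c) ≤ C * sn (s - 1 / 2) S c

lemma G_WW {A s : ℝ} (hG : G A s) (n : ℤ) : ∃ C : ℝ, 0 ≤ C ∧ ∀ a b, Adm A a b → ∀ S c,
    WW A n a b S c s ≤ C * sn (s + 1 / 2) S c := by
  obtain ⟨C1, h1, k1⟩ := hG (n - 1)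
  obtain ⟨C2, h2, k2⟩ := hG n
  obtain ⟨C3, h3, k3⟩ := hG (n + 1)
  refine ⟨C1 + C2 + C3, by positivity, fun a b hab S c => ?_⟩
  have e := sn_DD (s - 1 / 2) S c
  rw [show s - 1 / 2 + 1 = s + 1 / 2 by ring] at e
  have e1 := k1 a b hab S (DD c) (DD_zero c)
  have e2 := k2 a b hab S (DD c) (DD_zero c)
  have e3 := k3 a b hab S (DD c) (DD_zero c)
  have := mul_le_mul_of_nonneg_left e h1
  have := mul_le_mul_of_nonneg_left e h2
  have := mul_le_mul_of_nonneg_left e h3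
  unfold WW
  linarith

lemma G_zero {A : ℝ} (hA : 0 < A) : G A 0 := fun n => by
  obtain ⟨C, hC, h⟩ := F_L2 hA n
  refine ⟨C, hC, fun a b hab S c hc => ?_⟩
  rw [show (0 : ℝ) - 1 / 2 = -1 / 2 by norm_num]
  exact h a b hab S c hc

lemma G_one {A : ℝ} (hA : 0 < A) : G A 1 := fun n => by
  obtain ⟨C, hC, h⟩ := G_zero hA n
  obtain ⟨C', hC', h'⟩ := G_WW (G_zero hA) n
  have hc := cW_nonneg
  refine ⟨C + (1 + cW) * C', by positivity, fun a b hab S c hc0 => ?_⟩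
  have e := F_step_zero n hab S c
  have e1 := h a b hab S c hc0
  have e2 := mul_le_mul_of_nonneg_left (h' a b hab S c) (by positivity : 0 ≤ 1 + cW)
  have e3 := mul_le_mul_of_nonneg_left (sn_mono (by norm_num : (0:ℝ) - 1 / 2 ≤ 1 - 1 / 2) S c) hC
  rw [show (0:ℝ) + 1 / 2 = 1 - 1 / 2 by norm_num] at e2
  linarith

lemma G_succ {A : ℝ} (hA : 0 < A) {s : ℝ} (h1 : 1 ≤ s) (h2 : s ≤ 2) (hG : G A s) :
    G A (s + 1) := fun n => by
  obtain ⟨C, hC, h⟩ := G_zero hA n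
  obtain ⟨C', hC', h'⟩ := G_WW hG n
  have hc : 0 ≤ 2 ^ s * cW := mul_nonneg (by positivity) cW_nonneg
  refine ⟨C + (1 + 2 ^ s * cW * 2) * C', by positivity, fun a b hab S c hc0 => ?_⟩
  have e := F_step n hab S c (by linarith : 0 ≤ s)
  have e1 := h a b hab S c hc0
  have w1 := WW_mono A n hab.1 hab.2.1 S c h1
  have w0 := WW_nonneg A n a b S c 1
  have p := hab.le_one (by linarith : s + 1 ≤ 3)
  have e4 : 2 ^ s * cW * (pairNorm (s + 1) a b * WW A n a b S c 1 + WW A n a b S c s)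
      ≤ 2 ^ s * cW * (1 * WW A n a b S c s + WW A n a b S c s) := by gcongr
  have e2 := mul_le_mul_of_nonneg_left (h' a b hab S c) (by positivity : 0 ≤ 1 + 2 ^ s * cW * 2)
  have e3 := mul_le_mul_of_nonneg_left (sn_mono (by linarith : 0 - 1 / 2 ≤ s + 1 - 1 / 2) S c) hC
  rw [show s + 1 / 2 = s + 1 - 1 / 2 by ring] at e2
  linarith

lemma G_three {A : ℝ} (hA : 0 < A) : G A 3 := by
  have h2 := G_succ hA le_rfl (by norm_num) (G_one hA)
  have h3 := G_succ hA (by norm_num) (by norm_num) h2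
  norm_num at h3
  exact h3

/-! ### Real interpolation between `H^0` and `H^3` -/

lemma geom_low {α : ℝ} (hα : 0 < α) {x : ℝ} (hx : 0 < x) (N : ℕ) :
    ∑ m ∈ Finset.range N, (if (2:ℝ) ^ m < x then ((2:ℝ) ^ α) ^ m else 0)
      ≤ (2:ℝ) ^ α / ((2:ℝ) ^ α - 1) * x ^ α := by
  have hr : 1 < (2:ℝ) ^ α := Real.one_lt_rpow (by norm_num) hα
  set r := (2:ℝ) ^ α
  have hr1 : 0 < r - 1 := by linarith
  suffices h : (r - 1) * ∑ m ∈ Finset.range N, (if (2:ℝ) ^ m < x then r ^ m else 0) ≤ r ^ N ∧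
      (r - 1) * ∑ m ∈ Finset.range N, (if (2:ℝ) ^ m < x then r ^ m else 0) ≤ r * x ^ α by
    rw [div_mul_eq_mul_div, le_div_iff₀ hr1]; linarith [h.2]
  induction N with
  | zero => simp; positivity
  | succ N ih =>
    rw [Finset.sum_range_succ, mul_add]
    split_ifs with h
    · have e : r ^ N ≤ x ^ α := by
        have : r ^ N = ((2:ℝ) ^ N) ^ α := by
          rw [← Real.rpow_natCast, ← Real.rpow_mul (by norm_num), mul_comm, Real.rpow_mul (by norm_num),
            Real.rpow_natCast]
        rw [this]
        exact Real.rpow_le_rpow (by positivity) h.le hα.le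
      have : r ^ (N + 1) = r * r ^ N := by ring
      constructor
      · rw [this]; linarith [ih.1]
      · nlinarith [ih.1]
    · have : r ^ N ≤ r ^ (N + 1) := pow_le_pow_right₀ hr.le (by omega)
      simp only [mul_zero, add_zero]
      exact ⟨ih.1.trans this, ih.2⟩

lemma geom_high {α : ℝ} (hα : 0 < α) {x : ℝ} (hx : 0 < x) (N : ℕ) :
    ∑ m ∈ Finset.range N, (if x ≤ (2:ℝ) ^ m then ((2:ℝ) ^ (-α)) ^ m else 0)
      ≤ 1 / (1 - (2:ℝ) ^ (-α)) * x ^ (-α) := by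
  have hr : (2:ℝ) ^ (-α) < 1 := Real.rpow_lt_one_of_one_lt_of_neg (by norm_num) (by linarith)
  have hr0 : 0 < (2:ℝ) ^ (-α) := by positivity
  set r := (2:ℝ) ^ (-α)
  have hr1 : 0 < 1 - r := by linarith
  suffices h : (1 - r) * ∑ m ∈ Finset.range N, (if x ≤ (2:ℝ) ^ m then r ^ m else 0)
      ≤ max 0 (x ^ (-α) - r ^ N) by
    rw [div_mul_eq_mul_div, le_div_iff₀ hr1, mul_comm, one_mul]
    refine h.trans (max_le (by positivity) ?_)
    have : 0 < r ^ N := by positivity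
    linarith
  induction N with
  | zero => simp
  | succ N ih =>
    rw [Finset.sum_range_succ, mul_add]
    have e0 : r ^ (N + 1) = r * r ^ N := by ring
    split_ifs with h
    · have e : r ^ N ≤ x ^ (-α) := by
        have : r ^ N = ((2:ℝ) ^ N) ^ (-α) := by
          rw [← Real.rpow_natCast, ← Real.rpow_mul (by norm_num), mul_comm, Real.rpow_mul (by norm_num),
            Real.rpow_natCast]
        rw [this]
        exact Real.rpow_le_rpow_of_nonpos hx h (by linarith)
      rw [max_eq_right (by linarith)] at ih
      refine le_trans ?_ (le_max_right _ _)
      rw [e0]; linarith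
    · have : r ^ (N + 1) ≤ r ^ N := pow_le_pow_of_le_one hr0.le hr.le (by omega)
      simp only [mul_zero, add_zero]
      exact ih.trans (max_le_max_left _ (by linarith))

/-- The dyadic block containing `k`. -/
lemma dyadic (k : ℤ) : ∃ m : ℕ, (2:ℝ) ^ m ≤ jb k ∧ jb k ≤ 2 * (2:ℝ) ^ m := by
  have e : jb k = ((max 1 k.natAbs : ℕ) : ℝ) := by
    rw [jb]; push_cast; rw [Nat.cast_natAbs]; push_cast; rfl
  have h0 : max 1 k.natAbs ≠ 0 := by omega
  refine ⟨Nat.log 2 (max 1 k.natAbs), ?_, ?_⟩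
  · rw [e]; exact_mod_cast Nat.pow_log_le_self 2 h0
  · rw [e]
    have := (Nat.lt_pow_succ_log_self (b := 2) (by norm_num) (max 1 k.natAbs)).le
    rw [pow_succ'] at this
    exact_mod_cast this

lemma sum_wt_le {f : ℝ → ℂ} (hf : Sm f) (s : ℝ) (K : Finset ℤ) :
    ∑ k ∈ K, wt s (fc f) k ^ 2 ≤ sobNorm s f ^ 2 := by
  rw [sobNorm_eq, Real.sq_sqrt (tsum_nonneg fun _ => sq_nonneg _)]
  exact (hf.wt_summable s).sum_le_tsum K fun _ _ => sq_nonneg _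

lemma sob_le_of_sum {u : ℝ → ℂ} {s B : ℝ} (hB : 0 ≤ B)
    (h : ∀ K : Finset ℤ, ∑ k ∈ K, wt s (fc u) k ^ 2 ≤ B ^ 2) : sobNorm s u ≤ B := by
  rw [sobNorm_eq]
  exact Real.sqrt_le_iff.2 ⟨hB, Real.tsum_le_of_sum_le (fun _ => sq_nonneg _) h⟩

/-- Interpolation of the bound. A sequence is split at every dyadic scale into a high part, measured
by the bound in `H^0`, and a low part, measured by the bound in `H^3`; the sums over the scales are
geometric. -/
lemma G_interp {A : ℝ} (hA : 0 < A) {s : ℝ} (h0 : 0 < s) (h3 : s < 3) : G A s := fun n => by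
  obtain ⟨C0, hC0, k0⟩ := G_zero hA n
  obtain ⟨C3, hC3, k3⟩ := G_three hA n
  set r : ℝ := (2:ℝ) ^ (2 * s) with hr
  set ρ : ℝ := (2:ℝ) ^ (-(6 - 2 * s)) with hρ
  have hr0 : 0 < r := by positivity
  have hρ0 : 0 < ρ := by positivity
  have hr1 : 0 < r - 1 := by
    have := Real.one_lt_rpow (by norm_num : (1:ℝ) < 2) (by linarith : 0 < 2 * s); linarith
  have hρ1 : 0 < 1 - ρ := by
    have := Real.rpow_lt_one_of_one_lt_of_neg (by norm_num : (1:ℝ) < 2)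
      (by linarith : -(6 - 2 * s) < 0)
    linarith
  set B : ℝ := 2 * r * C0 ^ 2 * (r / (r - 1)) + 2 * C3 ^ 2 * (1 / (1 - ρ)) with hB
  have hB0 : 0 ≤ B := by positivity
  refine ⟨√B, Real.sqrt_nonneg _, fun a b hab S c hc => ?_⟩
  obtain ⟨ha, hb, -⟩ := id hab
  refine sob_le_of_sum (mul_nonneg (Real.sqrt_nonneg _) (sn_nonneg _ _ _)) fun K => ?_
  rw [mul_pow, Real.sq_sqrt hB0]
  choose mm hm1 hm2 using dyadic
  set N : ℕ := K.sup mm + 1 with hN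
  set Sl : ℕ → Finset ℤ := fun m => S.filter fun j => jb j ≤ (2:ℝ) ^ m with hSl
  set Sh : ℕ → Finset ℤ := fun m => S.filter fun j => ¬ jb j ≤ (2:ℝ) ^ m with hSh
  have split : ∀ m k, fc (F A n a b S c) k = fc (F A n a b (Sh m) c) k + fc (F A n a b (Sl m) c) k := by
    intro m k
    rw [← fc_add (F_sm A n ha hb _ c).cont (F_sm A n ha hb _ c).cont]
    congr 1; funext x
    rw [add_comm]
    exact (Finset.sum_filter_add_sum_filter_not S (fun j => jb j ≤ (2:ℝ) ^ m) _).symm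
  -- the bound at frequency `k` uses the splitting of `c` at the dyadic scale of `k`
  have pt : ∀ k ∈ K, wt s (fc (F A n a b S c)) k ^ 2 ≤ ∑ m ∈ Finset.range N,
      (2 * r * r ^ m * wt 0 (fc (F A n a b (Sh m) c)) k ^ 2
        + 2 * ρ ^ m * wt 3 (fc (F A n a b (Sl m) c)) k ^ 2) := by
    intro k hk
    have hkN : mm k ∈ Finset.range N := by
      rw [Finset.mem_range, hN]; exact Nat.lt_succ_of_le (Finset.le_sup hk)
    refine le_trans ?_ (Finset.single_le_sum (f := fun m =>
      (2 * r * r ^ m * wt 0 (fc (F A n a b (Sh m) c)) k ^ 2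
        + 2 * ρ ^ m * wt 3 (fc (F A n a b (Sl m) c)) k ^ 2)) (fun m _ => by positivity) hkN)
    set m := mm k
    have hj := jb_pos k
    have e1 : jb k ^ (2 * s) ≤ r * r ^ m := by
      have := Real.rpow_le_rpow hj.le (hm2 k) (by linarith : 0 ≤ 2 * s)
      rw [Real.mul_rpow (by norm_num) (by positivity)] at this
      refine this.trans (le_of_eq ?_)
      rw [hr, ← Real.rpow_natCast, ← Real.rpow_natCast, ← Real.rpow_mul (by norm_num),
        ← Real.rpow_mul (by norm_num), mul_comm (m : ℝ)]
    have e2 : jb k ^ (2 * s) ≤ ρ ^ m * jb k ^ (2 * 3 : ℝ) := by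
      have h := Real.rpow_le_rpow_of_nonpos (by positivity) (hm1 k) (by linarith : -(6 - 2 * s) ≤ 0)
      have : ρ ^ m = ((2:ℝ) ^ m) ^ (-(6 - 2 * s)) := by
        rw [hρ, ← Real.rpow_natCast, ← Real.rpow_natCast, ← Real.rpow_mul (by norm_num),
          ← Real.rpow_mul (by norm_num), mul_comm (m : ℝ)]
      rw [this]
      calc jb k ^ (2 * s) = jb k ^ (-(6 - 2 * s)) * jb k ^ (2 * 3 : ℝ) := by
            rw [← Real.rpow_add hj]; congr 1; ring
        _ ≤ _ := by gcongr
    rw [wt_sq, wt_sq, wt_sq, split m k, mul_zero, Real.rpow_zero, one_mul]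
    set u := fc (F A n a b (Sh m) c) k
    set v := fc (F A n a b (Sl m) c) k
    have h2 : ‖u + v‖ ^ 2 ≤ 2 * ‖u‖ ^ 2 + 2 * ‖v‖ ^ 2 := by
      have := norm_add_le u v
      have := norm_nonneg (u + v)
      nlinarith [sq_nonneg (‖u‖ - ‖v‖)]
    calc jb k ^ (2 * s) * ‖u + v‖ ^ 2 ≤ jb k ^ (2 * s) * (2 * ‖u‖ ^ 2 + 2 * ‖v‖ ^ 2) := by gcongr
      _ = 2 * (jb k ^ (2 * s) * ‖u‖ ^ 2) + 2 * (jb k ^ (2 * s) * ‖v‖ ^ 2) := by ring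
      _ ≤ 2 * ((r * r ^ m) * ‖u‖ ^ 2) + 2 * ((ρ ^ m * jb k ^ (2 * 3 : ℝ)) * ‖v‖ ^ 2) := by gcongr
      _ = _ := by ring
  refine (Finset.sum_le_sum pt).trans ?_
  rw [Finset.sum_comm]
  simp only [Finset.sum_add_distrib, ← Finset.mul_sum]
  have hi : ∀ m, ∑ k ∈ K, wt 0 (fc (F A n a b (Sh m) c)) k ^ 2 ≤ C0 ^ 2 *
      ∑ j ∈ S, if (2:ℝ) ^ m < jb j then wt (0 - 1 / 2) c j ^ 2 else 0 := by
    intro m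
    refine (sum_wt_le (F_sm A n ha hb _ c) 0 K).trans ?_
    have := k0 a b hab (Sh m) c hc
    have h := pow_le_pow_left₀ (sob_nonneg _ _) this 2
    rw [mul_pow, sn_sq, hSh, Finset.sum_filter] at h
    refine h.trans (le_of_eq ?_)
    simp only [not_le]
  have lo : ∀ m, ∑ k ∈ K, wt 3 (fc (F A n a b (Sl m) c)) k ^ 2 ≤ C3 ^ 2 *
      ∑ j ∈ S, if jb j ≤ (2:ℝ) ^ m then wt (3 - 1 / 2) c j ^ 2 else 0 := by
    intro m
    refine (sum_wt_le (F_sm A n ha hb _ c) 3 K).trans ?_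
    have := k3 a b hab (Sl m) c hc
    have h := pow_le_pow_left₀ (sob_nonneg _ _) this 2
    rwa [mul_pow, sn_sq, hSl, Finset.sum_filter] at h
  have s1 : ∑ m ∈ Finset.range N, 2 * r * r ^ m * ∑ k ∈ K, wt 0 (fc (F A n a b (Sh m) c)) k ^ 2
      ≤ 2 * r * C0 ^ 2 * (r / (r - 1)) * sn (s - 1 / 2) S c ^ 2 := by
    calc _ ≤ ∑ m ∈ Finset.range N, 2 * r * r ^ m * (C0 ^ 2 *
          ∑ j ∈ S, if (2:ℝ) ^ m < jb j then wt (0 - 1 / 2) c j ^ 2 else 0) := by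
          gcongr with m _; exact hi m
      _ = 2 * r * C0 ^ 2 * ∑ j ∈ S, wt (0 - 1 / 2) c j ^ 2 * ∑ m ∈ Finset.range N,
          (if (2:ℝ) ^ m < jb j then r ^ m else 0) := by
          simp only [Finset.mul_sum]
          rw [Finset.sum_comm]
          refine Finset.sum_congr rfl fun j _ => Finset.sum_congr rfl fun m _ => ?_
          split_ifs <;> ring
      _ ≤ 2 * r * C0 ^ 2 * ∑ j ∈ S, wt (0 - 1 / 2) c j ^ 2 * (r / (r - 1) * jb j ^ (2 * s)) := by
          gcongr with j _; exact geom_low (by linarith) (jb_pos j) N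
      _ = _ := by
          rw [sn_sq, mul_assoc _ (r / (r - 1)), Finset.mul_sum S _ (r / (r - 1))]
          congr 1
          refine Finset.sum_congr rfl fun j _ => ?_
          rw [wt_sq, wt_sq, show 2 * (s - 1 / 2) = 2 * (0 - 1 / 2) + 2 * s by ring,
            Real.rpow_add (jb_pos j)]
          ring
  have s2 : ∑ m ∈ Finset.range N, 2 * ρ ^ m * ∑ k ∈ K, wt 3 (fc (F A n a b (Sl m) c)) k ^ 2
      ≤ 2 * C3 ^ 2 * (1 / (1 - ρ)) * sn (s - 1 / 2) S c ^ 2 := by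
    calc _ ≤ ∑ m ∈ Finset.range N, 2 * ρ ^ m * (C3 ^ 2 *
          ∑ j ∈ S, if jb j ≤ (2:ℝ) ^ m then wt (3 - 1 / 2) c j ^ 2 else 0) := by
          gcongr with m _; exact lo m
      _ = 2 * C3 ^ 2 * ∑ j ∈ S, wt (3 - 1 / 2) c j ^ 2 * ∑ m ∈ Finset.range N,
          (if jb j ≤ (2:ℝ) ^ m then ρ ^ m else 0) := by
          simp only [Finset.mul_sum]
          rw [Finset.sum_comm]
          refine Finset.sum_congr rfl fun j _ => Finset.sum_congr rfl fun m _ => ?_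
          split_ifs <;> ring
      _ ≤ 2 * C3 ^ 2 * ∑ j ∈ S, wt (3 - 1 / 2) c j ^ 2 *
          (1 / (1 - ρ) * jb j ^ (-(6 - 2 * s))) := by
          gcongr with j _; exact geom_high (by linarith) (jb_pos j) N
      _ = _ := by
          rw [sn_sq, mul_assoc _ (1 / (1 - ρ)), Finset.mul_sum S _ (1 / (1 - ρ))]
          congr 1
          refine Finset.sum_congr rfl fun j _ => ?_
          rw [wt_sq, wt_sq, show 2 * (s - 1 / 2) = 2 * (3 - 1 / 2) + -(6 - 2 * s) by ring,
            Real.rpow_add (jb_pos j)]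
          ring
  rw [hB, add_mul]
  exact add_le_add s1 s2

/-! ### The tame estimate in `H^s` -/

/-- The tame bound in `H^s`, uniform in admissible pairs. -/
def EE (A s : ℝ) : Prop := ∀ n, ∃ C : ℝ, 0 ≤ C ∧ ∀ a b, Adm A a b → ∀ S c, c 0 = 0 →
  sobNorm s (F A n a b S c) ≤ C * (sn (s - 1 / 2) S c + pairNorm s a b * sn (3 / 2) S c)

lemma EE_WW {A s : ℝ} (hE : EE A s) (n : ℤ) : ∃ C : ℝ, 0 ≤ C ∧ ∀ a b, Adm A a b → ∀ S c,
    WW A n a b S c s ≤ C * (sn (s + 1 / 2) S c + pairNorm s a b * sn (5 / 2) S c) := by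
  obtain ⟨C1, h1, k1⟩ := hE (n - 1)
  obtain ⟨C2, h2, k2⟩ := hE n
  obtain ⟨C3, h3, k3⟩ := hE (n + 1)
  refine ⟨C1 + C2 + C3, by positivity, fun a b hab S c => ?_⟩
  have e := sn_DD (s - 1 / 2) S c
  rw [show s - 1 / 2 + 1 = s + 1 / 2 by ring] at e
  have e' := mul_le_mul_of_nonneg_left (sn_DD (3 / 2) S c) (pair_nonneg s a b)
  rw [show (3:ℝ) / 2 + 1 = 5 / 2 by norm_num] at e'
  have e0 := add_le_add e e'
  have e1 := k1 a b hab S (DD c) (DD_zero c)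
  have e2 := k2 a b hab S (DD c) (DD_zero c)
  have e3 := k3 a b hab S (DD c) (DD_zero c)
  have := mul_le_mul_of_nonneg_left e0 h1
  have := mul_le_mul_of_nonneg_left e0 h2
  have := mul_le_mul_of_nonneg_left e0 h3
  unfold WW
  linarith

/-- Interpolation between the two factors: `⟨k⟩^{2 s}⟨l⟩^5 ≤ ⟨k⟩^{2 s + 2}⟨l⟩^3 + ⟨k⟩^4⟨l⟩^{2 s + 1}`. -/
lemma weight_interp {s : ℝ} (hs : 2 ≤ s) {x y : ℝ} (hx : 0 < x) (hy : 0 < y) :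
    x ^ (2 * s) * y ^ (2 * (5 / 2) : ℝ) ≤
      x ^ (2 * (s + 1)) * y ^ (2 * (3 / 2) : ℝ) + x ^ (2 * 2 : ℝ) * y ^ (2 * (s + 1 / 2)) := by
  have p1 : 0 ≤ x ^ (2 * (s + 1)) * y ^ (2 * (3 / 2) : ℝ) := by positivity
  have p2 : 0 ≤ x ^ (2 * 2 : ℝ) * y ^ (2 * (s + 1 / 2)) := by positivity
  rcases le_total y x with h | h
  · have : y ^ (2:ℝ) ≤ x ^ (2:ℝ) := Real.rpow_le_rpow hy.le h (by norm_num)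
    rw [show (2 * (5 / 2) : ℝ) = 2 * (3 / 2) + 2 by norm_num, show 2 * (s + 1) = 2 * s + 2 by ring,
      Real.rpow_add hy, Real.rpow_add hx] at *
    have : x ^ (2 * s) * (y ^ (2 * (3 / 2) : ℝ) * y ^ (2:ℝ))
      ≤ x ^ (2 * s) * (y ^ (2 * (3 / 2) : ℝ) * x ^ (2:ℝ)) := by gcongr
    linarith
  · have : x ^ (2 * s - 4) ≤ y ^ (2 * s - 4) := Real.rpow_le_rpow hx.le h (by linarith)
    have e1 : x ^ (2 * s) = x ^ (2 * 2 : ℝ) * x ^ (2 * s - 4) := by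
      rw [← Real.rpow_add hx]; congr 1; ring
    have e2 : y ^ (2 * (s + 1 / 2)) = y ^ (2 * (5 / 2) : ℝ) * y ^ (2 * s - 4) := by
      rw [← Real.rpow_add hy]; congr 1; ring
    rw [e1, e2] at *
    have : x ^ (2 * 2 : ℝ) * x ^ (2 * s - 4) * y ^ (2 * (5 / 2) : ℝ)
      ≤ x ^ (2 * 2 : ℝ) * y ^ (2 * s - 4) * y ^ (2 * (5 / 2) : ℝ) := by gcongr
    linarith

lemma sob_interp {s : ℝ} (hs : 2 ≤ s) {f : ℝ → ℂ} (hf : Sm f) (S : Finset ℤ) (c : ℤ → ℂ) :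
    sobNorm s f * sn (5 / 2) S c ≤
      sobNorm (s + 1) f * sn (3 / 2) S c + sobNorm 2 f * sn (s + 1 / 2) S c := by
  have n1 : 0 ≤ sobNorm (s + 1) f * sn (3 / 2) S c := mul_nonneg (sob_nonneg _ _) (sn_nonneg _ _ _)
  have n2 : 0 ≤ sobNorm 2 f * sn (s + 1 / 2) S c := mul_nonneg (sob_nonneg _ _) (sn_nonneg _ _ _)
  have key : sobNorm s f ^ 2 * sn (5 / 2) S c ^ 2 ≤
      sobNorm (s + 1) f ^ 2 * sn (3 / 2) S c ^ 2 + sobNorm 2 f ^ 2 * sn (s + 1 / 2) S c ^ 2 := by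
    have hsq : ∀ r, sobNorm r f ^ 2 = ∑' k, wt r (fc f) k ^ 2 := fun r => by
      rw [sobNorm_eq, Real.sq_sqrt (tsum_nonneg fun _ => sq_nonneg _)]
    rw [hsq, hsq, hsq, ← tsum_mul_right, ← tsum_mul_right, ← tsum_mul_right,
      ← ((hf.wt_summable (s + 1)).mul_right _).tsum_add ((hf.wt_summable 2).mul_right _)]
    refine Summable.tsum_le_tsum (fun k => ?_) ((hf.wt_summable s).mul_right _)
      (((hf.wt_summable (s + 1)).mul_right _).add ((hf.wt_summable 2).mul_right _))
    rw [sn_sq, sn_sq, sn_sq, Finset.mul_sum, Finset.mul_sum, Finset.mul_sum, ← Finset.sum_add_distrib]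
    refine Finset.sum_le_sum fun l _ => ?_
    simp only [wt_sq]
    have := mul_le_mul_of_nonneg_right (weight_interp hs (jb_pos k) (jb_pos l))
      (by positivity : 0 ≤ ‖fc f k‖ ^ 2 * ‖c l‖ ^ 2)
    linarith
  refine le_of_sq_le_sq ?_ (add_nonneg n1 n2)
  nlinarith

lemma pair_interp {s : ℝ} (hs : 2 ≤ s) {a b : ℝ → ℝ} (ha : smoothPer a) (hb : smoothPer b)
    (S : Finset ℤ) (c : ℤ → ℂ) : pairNorm s a b * sn (5 / 2) S c ≤
      pairNorm (s + 1) a b * sn (3 / 2) S c + pairNorm 2 a b * sn (s + 1 / 2) S c := by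
  have h1 := sob_interp hs (sm_cx ha) S c
  have h2 := sob_interp hs (sm_cx hb) S c
  simp only [pairNorm_eq, add_mul]
  linarith

/-- One step of the induction: `F_step` followed by the interpolation inequality for the product of
`‖(a,b)‖_s` with the norm of order `5/2`. -/
lemma EE_succ {A : ℝ} (hA : 0 < A) {s : ℝ} (hs : 2 ≤ s) (hE : EE A s) : EE A (s + 1) := fun n => by
  obtain ⟨C0, hC0, k0⟩ := G_zero hA n
  obtain ⟨C1, hC1, k1⟩ := G_WW (G_one hA) n
  obtain ⟨C2, hC2, k2⟩ := EE_WW hE n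
  have hc : 0 ≤ 2 ^ s * cW := mul_nonneg (by positivity) cW_nonneg
  set κ := 2 ^ s * cW
  refine ⟨C0 + 2 * (1 + κ) * C2 + κ * C1, by positivity, fun a b hab S c hc0 => ?_⟩
  obtain ⟨ha, hb, -⟩ := id hab
  have e := F_step n hab S c (by linarith : 0 ≤ s)
  have e0 := k0 a b hab S c hc0
  have e1 := k1 a b hab S c
  have e2 := k2 a b hab S c
  rw [show (1:ℝ) + 1 / 2 = 3 / 2 by norm_num] at e1
  rw [show s + 1 - 1 / 2 = s + 1 / 2 by ring]
  have hp := pair_nonneg (s + 1) a b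
  have hP := mul_le_mul_of_nonneg_left e1 hp
  have i1 := pair_interp hs ha hb S c
  have i2 := mul_le_mul_of_nonneg_right (hab.le_one (by norm_num : (2:ℝ) ≤ 3)) (sn_nonneg (s + 1 / 2) S c)
  have i3 := sn_mono (by linarith : 0 - 1 / 2 ≤ s + 1 / 2) S c
  set p := pairNorm (s + 1) a b
  set u := sn (s + 1 / 2) S c
  set v := sn (3 / 2) S c
  have hu : 0 ≤ u := sn_nonneg _ _ _
  have hv : 0 ≤ v := sn_nonneg _ _ _
  have hpv := mul_nonneg hp hv
  have f2 : WW A n a b S c s ≤ C2 * (2 * (u + p * v)) :=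
    e2.trans (mul_le_mul_of_nonneg_left (by linarith) hC2)
  have f0 : sobNorm 0 (F A n a b S c) ≤ C0 * (u + p * v) :=
    e0.trans (mul_le_mul_of_nonneg_left (by linarith) hC0)
  have f1 : p * WW A n a b S c 1 ≤ C1 * (u + p * v) := by
    refine hP.trans ?_
    have := mul_nonneg hC1 hu
    linarith
  have f3 := mul_le_mul_of_nonneg_left (add_le_add f1 f2) hc
  linarith

/-- The tame estimate for every `s ≥ 2`, by induction on the integer part of `s`. For `s < 3` it is
the bound `G`, without the second term. -/
lemma EE_all {A : ℝ} (hA : 0 < A) {s : ℝ} (hs : 2 ≤ s) : EE A s := by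
  suffices h : ∀ (m : ℕ) (s : ℝ), 2 ≤ s → s < m + 3 → EE A s by
    obtain ⟨m, hm⟩ := exists_nat_gt s
    exact h m s hs (by linarith)
  intro m
  induction m with
  | zero =>
    intro s hs h3 n
    obtain ⟨C, hC, h⟩ := G_interp hA (by linarith : 0 < s) (by simpa using h3) n
    refine ⟨C, hC, fun a b hab S c hc => (h a b hab S c hc).trans ?_⟩
    have := mul_nonneg (pair_nonneg s a b) (sn_nonneg (3 / 2) S c)
    exact mul_le_mul_of_nonneg_left (by linarith) hC
  | succ m ih =>
    intro s hs h3
    push_cast at h3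
    by_cases h : s < m + 3
    · exact ih s hs h
    · have hm : (0:ℝ) ≤ m := by positivity
      have := EE_succ hA (s := s - 1) (by linarith) (ih (s - 1) (by linarith) (by linarith))
      rwa [sub_add_cancel] at this

/-! ### The increment along a segment -/

lemma smoothPer.scale {a : ℝ → ℝ} (ha : smoothPer a) (t : ℝ) : smoothPer fun x => t * a x :=
  ⟨contDiff_const.mul ha.1, fun x => by simp only [ha.2 x]⟩

lemma pair_scale (s t : ℝ) (a b : ℝ → ℝ) :
    pairNorm s (fun x => t * a x) (fun x => t * b x) = |t| * pairNorm s a b := by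
  have e : ∀ a : ℝ → ℝ, cx (fun x => t * a x) = fun x => (t : ℂ) * cx a x := fun a => by
    funext x; simp [cx]
  simp only [pairNorm_eq, e, sob_smul, Complex.norm_real, Real.norm_eq_abs, mul_add]

lemma Adm.scale {A : ℝ} {a b : ℝ → ℝ} (h : Adm A a b) {t : ℝ} (h0 : 0 ≤ t) (h1 : t ≤ 1) :
    Adm A (fun x => t * a x) (fun x => t * b x) := by
  refine ⟨h.1.scale t, h.2.1.scale t, ?_⟩
  rw [pair_scale, abs_of_nonneg h0]
  exact (mul_le_of_le_one_left (pair_nonneg _ _ _) h1).trans_lt h.2.2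

/-- The derivative of `F` along the segment from `(0,0)` to `(a,b)`. -/
def ZZ (A : ℝ) (n : ℤ) (a b : ℝ → ℝ) (S : Finset ℤ) (c : ℤ → ℂ) (t x : ℝ) : ℂ :=
  cx a x * XX A n (fun x => t * a x) (fun x => t * b x) S c x
    + cx b x * YY A n (fun x => t * a x) (fun x => t * b x) S c x

lemma F_hasDerivAt_t (A : ℝ) (n : ℤ) (a b : ℝ → ℝ) (S : Finset ℤ) (c : ℤ → ℂ) (t x : ℝ) :
    HasDerivAt (fun t => F A n (fun x => t * a x) (fun x => t * b x) S c x) (ZZ A n a b S c t x) t := by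
  have hm : ∀ j : ℤ, HasDerivAt (fun t => md A n (fun x => t * a x) (fun x => t * b x) j x)
      (cx a x * (j * ((1 / 2) * (md A (n - 1) (fun x => t * a x) (fun x => t * b x) j x
        - md A (n + 1) (fun x => t * a x) (fun x => t * b x) j x)))
        + cx b x * (Complex.I * (j * md A n (fun x => t * a x) (fun x => t * b x) j x))) t := by
    intro j
    have h1 := ((Jn_hasDerivAt n (j * (A + t * a x))).comp t
      ((((hasDerivAt_id t).mul_const (a x)).const_add A).const_mul (j : ℝ))).ofReal_comp
    have h2 := (ee_hasDerivAt j (x + t * b x)).scomp t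
      (((hasDerivAt_id t).mul_const (b x)).const_add x)
    refine HasDerivAt.congr_deriv
      (f := fun t => md A n (fun x => t * a x) (fun x => t * b x) j x) (h1.mul h2) ?_
    simp only [md, cx, Function.comp, Complex.real_smul, id]
    push_cast
    ring
  refine HasDerivAt.congr_deriv (HasDerivAt.fun_sum (u := S) fun j _ => (hm j).const_mul (c j)) ?_
  simp only [ZZ, XX, YY, F, DD, Finset.mul_sum, ← Finset.sum_add_distrib]
  refine Finset.sum_congr rfl fun j _ => ?_
  ring

lemma ZZ_cont (A : ℝ) (n : ℤ) {a b : ℝ → ℝ} (ha : smoothPer a) (hb : smoothPer b) (S : Finset ℤ)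
    (c : ℤ → ℂ) : Continuous (Function.uncurry (ZZ A n a b S c)) := by
  have := ha.1.continuous
  have := hb.1.continuous
  have := fun j => (ee_sm j).cont
  have := fun n => (Jn_contDiff n).continuous
  unfold Function.uncurry ZZ XX YY F md cx
  fun_prop

lemma ZZ_sm (A : ℝ) (n : ℤ) {a b : ℝ → ℝ} (ha : smoothPer a) (hb : smoothPer b) (S : Finset ℤ)
    (c : ℤ → ℂ) (t : ℝ) : Sm (ZZ A n a b S c t) :=
  ((sm_cx ha).mul (XX_sm A n (ha.scale t) (hb.scale t) S c)).add
    ((sm_cx hb).mul (YY_sm A n (ha.scale t) (hb.scale t) S c))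

lemma fc_F_hasDerivAt (A : ℝ) (n : ℤ) {a b : ℝ → ℝ} (ha : smoothPer a) (hb : smoothPer b)
    (S : Finset ℤ) (c : ℤ → ℂ) (k : ℤ) (t : ℝ) :
    HasDerivAt (fun t => fc (F A n (fun x => t * a x) (fun x => t * b x) S c) k)
      (fc (ZZ A n a b S c t) k) t := by
  have he := (ee_sm (-k)).cont
  have hZ := ZZ_cont A n ha hb S c
  have h := (hasDerivAt_param
    (f := fun t x => F A n (fun x => t * a x) (fun x => t * b x) S c x * ee (-k) x)
    (f' := fun t x => ZZ A n a b S c t x * ee (-k) x) 0 (2 * π)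
    (fun t => (F_sm A n (ha.scale t) (hb.scale t) S c).cont.mul he)
    (by
      have : Continuous fun p : ℝ × ℝ => Function.uncurry (ZZ A n a b S c) p * ee (-k) p.2 := by
        fun_prop
      exact this)
    (fun t x => (F_hasDerivAt_t A n a b S c t x).mul_const _) t).const_mul (1 / (2 * (π : ℂ)))
  simp only [fc_eq]
  exact h

/-- The mean value inequality in `H^s`: the increment of a family of functions is bounded by the
supremum of the norms of its derivative. It is reduced to scalars by pairing finitely many Fourier
coefficients with the increment itself. -/
lemma sob_increment {f g : ℝ → ℝ → ℂ} {u : ℝ → ℂ} {s B : ℝ} (hB : 0 ≤ B)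
    (hd : ∀ k t, HasDerivAt (fun t => fc (f t) k) (fc (g t) k) t) (hg : ∀ t, Sm (g t))
    (hb : ∀ t, 0 ≤ t → t ≤ 1 → sobNorm s (g t) ≤ B)
    (hu : ∀ k, fc u k = fc (f 1) k - fc (f 0) k) : sobNorm s u ≤ B := by
  refine sob_le_of_sum hB fun K => ?_
  set Q2 := ∑ k ∈ K, wt s (fc u) k ^ 2 with hQ2
  have hQ0 : 0 ≤ Q2 := Finset.sum_nonneg fun _ _ => sq_nonneg _
  set d : ℤ → ℂ := fun k => ((jb k ^ (2 * s) : ℝ) : ℂ) * (starRingEnd ℂ) (fc u k) with hd'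
  have hder : ∀ t, HasDerivAt (fun t => ∑ k ∈ K, d k * fc (f t) k) (∑ k ∈ K, d k * fc (g t) k) t :=
    fun t => HasDerivAt.fun_sum fun k _ => (hd k t).const_mul (d k)
  have hbd : ∀ t ∈ Set.Icc (0:ℝ) 1, ‖∑ k ∈ K, d k * fc (g t) k‖ ≤ √Q2 * B := by
    intro t ht
    have e : ∀ k, ‖d k * fc (g t) k‖ = wt s (fc u) k * wt s (fc (g t)) k := by
      intro k
      have hj := jb_pos k
      rw [hd', norm_mul, norm_mul, Complex.norm_real, Complex.norm_conj,
        Real.norm_of_nonneg (by positivity), wt, wt, two_mul, Real.rpow_add hj]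
      ring
    refine (norm_sum_le _ _).trans ?_
    simp only [e]
    refine (Real.sum_mul_le_sqrt_mul_sqrt K _ _).trans ?_
    refine mul_le_mul_of_nonneg_left ?_ (Real.sqrt_nonneg _)
    refine Real.sqrt_le_iff.2 ⟨hB, (sum_wt_le (hg t) s K).trans ?_⟩
    have := hb t ht.1 ht.2
    have := sob_nonneg s (g t)
    gcongr
  have h := norm_sub_le_of_deriv (B := fun t => √Q2 * B * t) (B' := fun _ => √Q2 * B) zero_le_one
    (fun t _ => hder t) (fun t _ => by simpa using (hasDerivAt_id t).const_mul (√Q2 * B)) hbd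
  have e : ∑ k ∈ K, d k * fc (f 1) k - ∑ k ∈ K, d k * fc (f 0) k = (Q2 : ℂ) := by
    rw [← Finset.sum_sub_distrib, hQ2]
    push_cast
    refine Finset.sum_congr rfl fun k _ => ?_
    rw [← mul_sub, ← hu, hd', mul_assoc, Complex.conj_mul']
    rw [← Complex.ofReal_pow, ← Complex.ofReal_mul, ← wt_sq]
    push_cast; rfl
  rw [e, Complex.norm_real, Real.norm_of_nonneg hQ0, mul_one, mul_zero, sub_zero] at h
  have h2 : √Q2 * √Q2 ≤ √Q2 * B := by rwa [Real.mul_self_sqrt hQ0]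
  rcases (Real.sqrt_nonneg Q2).eq_or_lt with h0 | h0
  · have hz : Q2 = 0 := (Real.sqrt_eq_zero hQ0).1 h0.symm
    rw [hz]
    positivity
  · have := le_of_mul_le_mul_left h2 h0
    rw [← Real.sq_sqrt hQ0]
    gcongr

/-- The increment of `F` between `(0,0)` and `(a,b)`, from the tame estimate along the segment that
joins them. -/
lemma F_diff {A : ℝ} (hA : 0 < A) {s : ℝ} (hs : 2 ≤ s) (n : ℤ) : ∃ C : ℝ, 0 ≤ C ∧
    ∀ a b, Adm A a b → ∀ S c, sobNorm s (fun x => F A n a b S c x + (-1) *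
      F A n (fun _ => 0) (fun _ => 0) S c x)
        ≤ C * (pairNorm 2 a b * sn (s + 1 / 2) S c + pairNorm s a b * sn (5 / 2) S c) := by
  obtain ⟨C1, hC1, k1⟩ := G_WW (G_one hA) n
  obtain ⟨C2, hC2, k2⟩ := EE_WW (EE_all hA hs) n
  have hc : 0 ≤ 2 ^ s * cW := mul_nonneg (by positivity) cW_nonneg
  set κ := 2 ^ s * cW
  refine ⟨κ * (C1 + C2), by positivity, fun a b hab S c => ?_⟩
  obtain ⟨ha, hb, -⟩ := id hab
  have p2 := pair_nonneg 2 a b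
  have ps := pair_nonneg s a b
  have n1 := sn_nonneg (s + 1 / 2) S c
  have n2 := sn_nonneg (5 / 2) S c
  refine sob_increment (f := fun t => F A n (fun x => t * a x) (fun x => t * b x) S c)
    (g := fun t => ZZ A n a b S c t) (by positivity) (fun k t => fc_F_hasDerivAt A n ha hb S c k t)
    (fun t => ZZ_sm A n ha hb S c t) (fun t ht0 ht1 => ?_) (fun k => ?_)
  · have hab' := hab.scale ht0 ht1
    have sX := XX_sm A n hab'.1 hab'.2.1 S c
    have sY := YY_sm A n hab'.1 hab'.2.1 S c
    have h1 := sob_add ((sm_cx ha).mul sX) ((sm_cx hb).mul sY) s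
    have h2 := tame_pair A n hab'.1 hab'.2.1 S c (sm_cx ha) (sm_cx hb) (by linarith : 0 ≤ s)
    have w1 := k1 _ _ hab' S c
    have w2 := k2 _ _ hab' S c
    rw [pair_scale, abs_of_nonneg ht0] at w2
    rw [← pairNorm_eq, ← pairNorm_eq] at h2
    set W1 := WW A n (fun x => t * a x) (fun x => t * b x) S c 1
    set Ws := WW A n (fun x => t * a x) (fun x => t * b x) S c s
    have hWs : 0 ≤ Ws := WW_nonneg _ _ _ _ _ _ _
    have q1 := hab.le_one (by norm_num : (2:ℝ) ≤ 3)
    have q2 := pair_mono ha hb (by norm_num : (1:ℝ) ≤ 2)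
    have q3 : t * pairNorm s a b ≤ pairNorm s a b := mul_le_of_le_one_left ps ht1
    have v1 : W1 ≤ C1 * sn (5 / 2) S c :=
      w1.trans (mul_le_mul_of_nonneg_left (sn_mono (by norm_num) S c) hC1)
    have v2 : Ws ≤ C2 * (sn (s + 1 / 2) S c + pairNorm s a b * sn (5 / 2) S c) :=
      w2.trans (by gcongr)
    have v3 : pairNorm 1 a b * Ws ≤
        C2 * (pairNorm 2 a b * sn (s + 1 / 2) S c + pairNorm s a b * sn (5 / 2) S c) := by
      calc pairNorm 1 a b * Ws ≤ pairNorm 2 a b * (C2 * (sn (s + 1 / 2) S c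
            + pairNorm s a b * sn (5 / 2) S c)) := by gcongr
        _ = C2 * (pairNorm 2 a b * sn (s + 1 / 2) S c
            + pairNorm 2 a b * (pairNorm s a b * sn (5 / 2) S c)) := by ring
        _ ≤ C2 * (pairNorm 2 a b * sn (s + 1 / 2) S c
            + 1 * (pairNorm s a b * sn (5 / 2) S c)) := by gcongr
        _ = _ := by ring
    have v4 := mul_le_mul_of_nonneg_left v1 ps
    have v5 : 0 ≤ C1 * (pairNorm 2 a b * sn (s + 1 / 2) S c) := by positivity
    have v6 : pairNorm s a b * W1 + pairNorm 1 a b * Ws ≤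
        (C1 + C2) * (pairNorm 2 a b * sn (s + 1 / 2) S c + pairNorm s a b * sn (5 / 2) S c) := by
      linarith
    have v7 := mul_le_mul_of_nonneg_left v6 hc
    unfold ZZ
    linarith
  · have z : smoothPer fun _ => (0:ℝ) := ⟨contDiff_const, fun _ => rfl⟩
    have h0 := (F_sm A n z z S c)
    rw [fc_add (F_sm A n ha hb S c).cont ((Sm.const (-1)).mul h0).cont, fc_smul]
    simp only [one_mul, zero_mul]
    ring

/-! ### Passage to the full series -/

/-- A Sobolev bound that holds uniformly for the finite partial sums passes to the sum of the series. -/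
lemma sob_le_of_series {e : ℤ → ℝ → ℂ} {c : ℤ → ℂ} {u : ℝ → ℂ} {M s B : ℝ}
    (hc : Summable fun j => ‖c j‖) (he : ∀ j, Sm (e j)) (hM : ∀ j x, ‖e j x‖ ≤ M)
    (hu : ∀ x, HasSum (fun j => c j * e j x) (u x))
    (hB : ∀ S : Finset ℤ, sobNorm s (fun x => ∑ j ∈ S, c j * e j x) ≤ B) : sobNorm s u ≤ B := by
  refine sob_le_of_sum ((sob_nonneg _ _).trans (hB ∅)) fun K => ?_
  have hlim : ∀ k, Filter.Tendsto (fun S : Finset ℤ => fc (fun x => ∑ j ∈ S, c j * e j x) k)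
      Filter.atTop (nhds (fc u k)) := by
    intro k
    have h := hasSum_fc_mul hc (fun j => (he j).cont) hM hu (continuous_const (y := (1:ℂ))) k
    simp only [mul_one] at h
    refine Filter.Tendsto.congr (fun S => ?_) h
    have hs := fc_sum S (f := fun j x => c j * e j x)
      (fun j _ => continuous_const.mul (he j).cont) k
    rw [hs]
    exact Finset.sum_congr rfl fun j _ => (fc_smul _ _ _).symm
  have hl : Filter.Tendsto (fun S : Finset ℤ => ∑ k ∈ K,
      wt s (fc (fun x => ∑ j ∈ S, c j * e j x)) k ^ 2) Filter.atTop
      (nhds (∑ k ∈ K, wt s (fc u) k ^ 2)) :=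
    tendsto_finsetSum K fun k _ => ((hlim k).norm.const_mul _).pow 2
  refine le_of_tendsto' hl fun S => ?_
  have hS : Sm fun x => ∑ j ∈ S, c j * e j x := Sm.sum S fun j _ => (Sm.const _).mul (he j)
  exact (sum_wt_le hS s K).trans (pow_le_pow_left₀ (sob_nonneg _ _) (hB S) 2)

/-- The modes of the first component. -/
def e1 (A : ℝ) (a b : ℝ → ℝ) (j : ℤ) (x : ℝ) : ℂ :=
  π * (md A 0 a b j x + (-1) * md A 2 a b j x)

/-- The modes of the second component. -/
def e2 (A : ℝ) (a b : ℝ → ℝ) (j : ℤ) (x : ℝ) : ℂ := 2 * π * Complex.I * md A 1 a b j x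

lemma e1_sm (A : ℝ) {a b : ℝ → ℝ} (ha : smoothPer a) (hb : smoothPer b) (j : ℤ) : Sm (e1 A a b j) :=
  (Sm.const _).mul ((md_sm A 0 ha hb j).add ((Sm.const _).mul (md_sm A 2 ha hb j)))

lemma e2_sm (A : ℝ) {a b : ℝ → ℝ} (ha : smoothPer a) (hb : smoothPer b) (j : ℤ) : Sm (e2 A a b j) :=
  (Sm.const _).mul (md_sm A 1 ha hb j)

lemma pi_norm : ‖(π : ℂ)‖ = π := by
  rw [Complex.norm_real, Real.norm_of_nonneg Real.pi_pos.le]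

lemma two_pi_I_norm : ‖2 * (π : ℂ) * Complex.I‖ = 2 * π := by
  rw [norm_mul, norm_mul, pi_norm, Complex.norm_I]; norm_num

lemma e1_norm (A : ℝ) (a b : ℝ → ℝ) (j : ℤ) (x : ℝ) : ‖e1 A a b j x‖ ≤ 2 * π := by
  rw [e1, norm_mul, pi_norm, mul_comm]
  have h0 := md_norm A 0 a b j x
  have h2 := md_norm A 2 a b j x
  have := norm_add_le (md A 0 a b j x) ((-1) * md A 2 a b j x)
  rw [norm_mul, norm_neg, norm_one, one_mul] at this
  have hp := Real.pi_pos
  nlinarith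

lemma e2_norm (A : ℝ) (a b : ℝ → ℝ) (j : ℤ) (x : ℝ) : ‖e2 A a b j x‖ ≤ 2 * π := by
  rw [e2, norm_mul, two_pi_I_norm]
  exact mul_le_of_le_one_right Real.two_pi_pos.le (md_norm _ _ _ _ _ _)

lemma summable_modes {c : ℤ → ℂ} (hc : Summable fun j => ‖c j‖) {e : ℤ → ℂ} {M : ℝ}
    (he : ∀ j, ‖e j‖ ≤ M) : Summable fun j => c j * e j :=
  Summable.of_norm_bounded (hc.mul_right M) fun j => by
    rw [norm_mul]; exact mul_le_mul_of_nonneg_left (he j) (norm_nonneg _)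

/-- The first component as an absolutely convergent series, with `J_1' = (J_0 - J_2)/2`. -/
lemma dS1_hasSum (A : ℝ) (a b γ : ℝ → ℝ) (h0 : fcR γ 0 = 0) (hc : Summable fun j => ‖fcR γ j‖)
    (x : ℝ) : HasSum (fun j => fcR γ j * e1 A a b j x) (dSstar1 A a b γ x) := by
  have h := (summable_modes hc (fun j => e1_norm A a b j x)).hasSum
  have e : dSstar1 A a b γ x = ∑' j, fcR γ j * e1 A a b j x := by
    rw [dSstar1, ← tsum_mul_left]
    refine tsum_congr fun j => ?_
    split_ifs with hj
    · subst hj; simp [h0]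
    · have : J1 = Jn 1 := funext J1_eq
      rw [this, (Jn_hasDerivAt 1 _).deriv]
      simp only [e1, md, ee]
      norm_num
      ring
  rw [e]; exact h

lemma dS2_hasSum (A : ℝ) (a b γ : ℝ → ℝ) (h0 : fcR γ 0 = 0) (hc : Summable fun j => ‖fcR γ j‖)
    (x : ℝ) : HasSum (fun j => fcR γ j * e2 A a b j x) (dSstar2 A a b γ x) := by
  have h := (summable_modes hc (fun j => e2_norm A a b j x)).hasSum
  have e : dSstar2 A a b γ x = ∑' j, fcR γ j * e2 A a b j x := by
    rw [dSstar2, ← tsum_mul_left]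
    refine tsum_congr fun j => ?_
    split_ifs with hj
    · subst hj; simp [h0]
    · rw [J1_eq]
      simp only [e2, md, ee]
      ring
  rw [e]; exact h

lemma e1_sum (A : ℝ) (a b : ℝ → ℝ) (S : Finset ℤ) (c : ℤ → ℂ) (x : ℝ) :
    ∑ j ∈ S, c j * e1 A a b j x = π * (F A 0 a b S c x + (-1) * F A 2 a b S c x) := by
  simp only [e1, F, Finset.mul_sum, ← Finset.sum_add_distrib]
  exact Finset.sum_congr rfl fun j _ => by ring

lemma e2_sum (A : ℝ) (a b : ℝ → ℝ) (S : Finset ℤ) (c : ℤ → ℂ) (x : ℝ) :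
    ∑ j ∈ S, c j * e2 A a b j x = 2 * π * Complex.I * F A 1 a b S c x := by
  simp only [e2, F, Finset.mul_sum]
  exact Finset.sum_congr rfl fun j _ => by ring

lemma sob_sub_le {f g : ℝ → ℂ} (hf : Sm f) (hg : Sm g) (s : ℝ) :
    sobNorm s (fun x => π * (f x + (-1) * g x)) ≤ π * (sobNorm s f + sobNorm s g) := by
  have h1 := sob_smul (fun x => f x + (-1) * g x) (π : ℂ) s
  have h2 := sob_add hf ((Sm.const (-1)).mul hg) s
  have h3 := sob_smul g (-1) s
  rw [norm_neg, norm_one, one_mul] at h3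
  rw [h3] at h2
  rw [h1, pi_norm]
  exact mul_le_mul_of_nonneg_left h2 Real.pi_pos.le

lemma memHs_mono {u : ℝ → ℝ} {s t : ℝ} (h : memHsR t u) (hst : s ≤ t) : memHsR s u := by
  refine Summable.of_nonneg_of_le (fun j => ?_) (fun j => ?_) h
  · have := jb_pos j; positivity
  · have := Real.rpow_le_rpow_of_exponent_le (jb_ge_one j) (by linarith : 2 * s ≤ 2 * t)
    gcongr

lemma sn_le {γ : ℝ → ℝ} {r : ℝ} (h : memHsR r γ) (S : Finset ℤ) :
    sn r S (fcR γ) ≤ sobNormR r γ := by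
  refine Real.sqrt_le_sqrt ?_
  simp only [wt_sq]
  exact h.sum_le_tsum S fun j _ => by have := jb_pos j; positivity

lemma fcR_summable {γ : ℝ → ℝ} {r : ℝ} (hr : 1 ≤ r) (h : memHsR r γ) :
    Summable fun j => ‖fcR γ j‖ :=
  (wiener_seq (c := fcR γ) (memHs_mono h hr)).1

/-- The first estimate, for admissible pairs. -/
lemma part_one {A : ℝ} (hA : 0 < A) {s : ℝ} (hs : 2 ≤ s) : ∃ C : ℝ, 0 ≤ C ∧ ∀ a b, Adm A a b →
    ∀ γ : ℝ → ℝ, fcR γ 0 = 0 → memHsR (s - 1 / 2) γ →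
      sobNorm s (dSstar1 A a b γ) + sobNorm s (dSstar2 A a b γ) ≤
        C * (sobNormR (s - 1 / 2) γ + pairNorm s a b * sobNormR (3 / 2) γ) := by
  obtain ⟨C0, hC0, k0⟩ := EE_all hA hs 0
  obtain ⟨C1, hC1, k1⟩ := EE_all hA hs 1
  obtain ⟨C2, hC2, k2⟩ := EE_all hA hs 2
  have hp := Real.pi_pos
  refine ⟨π * (C0 + C2) + 2 * π * C1, by positivity, fun a b hab γ h0 hm => ?_⟩
  obtain ⟨ha, hb, -⟩ := id hab
  have hc := fcR_summable (by linarith) hm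
  set B := sobNormR (s - 1 / 2) γ + pairNorm s a b * sobNormR (3 / 2) γ
  have hB : ∀ S, sn (s - 1 / 2) S (fcR γ) + pairNorm s a b * sn (3 / 2) S (fcR γ) ≤ B := fun S =>
    add_le_add (sn_le hm S) (mul_le_mul_of_nonneg_left
      (sn_le (memHs_mono hm (by linarith)) S) (pair_nonneg _ _ _))
  have r1 : sobNorm s (dSstar1 A a b γ) ≤ π * (C0 + C2) * B := by
    refine sob_le_of_series hc (e1_sm A ha hb) (e1_norm A a b) (dS1_hasSum A a b γ h0 hc) fun S => ?_
    simp only [e1_sum]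
    refine (sob_sub_le (F_sm A 0 ha hb S _) (F_sm A 2 ha hb S _) s).trans ?_
    have f0 := (k0 a b hab S _ h0).trans (mul_le_mul_of_nonneg_left (hB S) hC0)
    have f2 := (k2 a b hab S _ h0).trans (mul_le_mul_of_nonneg_left (hB S) hC2)
    rw [mul_assoc]
    exact mul_le_mul_of_nonneg_left (by linarith) hp.le
  have r2 : sobNorm s (dSstar2 A a b γ) ≤ 2 * π * C1 * B := by
    refine sob_le_of_series hc (e2_sm A ha hb) (e2_norm A a b) (dS2_hasSum A a b γ h0 hc) fun S => ?_
    simp only [e2_sum]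
    rw [sob_smul, two_pi_I_norm, mul_assoc (2 * π)]
    exact mul_le_mul_of_nonneg_left ((k1 a b hab S _ h0).trans
      (mul_le_mul_of_nonneg_left (hB S) hC1)) (by positivity)
  linarith

/-- The second estimate, for admissible pairs. -/
lemma part_two {A : ℝ} (hA : 0 < A) {s : ℝ} (hs : 2 ≤ s) : ∃ C : ℝ, 0 ≤ C ∧ ∀ a b, Adm A a b →
    ∀ γ : ℝ → ℝ, fcR γ 0 = 0 → memHsR (s + 1 / 2) γ →
      sobNorm s (fun x => dSstar1 A a b γ x - dSstar1 A (fun _ => 0) (fun _ => 0) γ x)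
      + sobNorm s (fun x => dSstar2 A a b γ x - dSstar2 A (fun _ => 0) (fun _ => 0) γ x) ≤
        C * (pairNorm 2 a b * sobNormR (s + 1 / 2) γ + pairNorm s a b * sobNormR (5 / 2) γ) := by
  obtain ⟨C0, hC0, k0⟩ := F_diff hA hs 0
  obtain ⟨C1, hC1, k1⟩ := F_diff hA hs 1
  obtain ⟨C2, hC2, k2⟩ := F_diff hA hs 2
  have hp := Real.pi_pos
  refine ⟨π * (C0 + C2) + 2 * π * C1, by positivity, fun a b hab γ h0 hm => ?_⟩
  obtain ⟨ha, hb, -⟩ := id hab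
  have z : smoothPer fun _ => (0:ℝ) := ⟨contDiff_const, fun _ => rfl⟩
  have hc := fcR_summable (by linarith) hm
  set B := pairNorm 2 a b * sobNormR (s + 1 / 2) γ + pairNorm s a b * sobNormR (5 / 2) γ
  have hB : ∀ S, pairNorm 2 a b * sn (s + 1 / 2) S (fcR γ)
      + pairNorm s a b * sn (5 / 2) S (fcR γ) ≤ B := fun S =>
    add_le_add (mul_le_mul_of_nonneg_left (sn_le hm S) (pair_nonneg _ _ _))
      (mul_le_mul_of_nonneg_left (sn_le (memHs_mono hm (by linarith)) S) (pair_nonneg _ _ _))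
  have nb : ∀ {u v : ℂ}, ‖u‖ ≤ 2 * π → ‖v‖ ≤ 2 * π → ‖u + (-1) * v‖ ≤ 4 * π := by
    intro u v hu hv
    refine (norm_add_le _ _).trans ?_
    rw [norm_mul, norm_neg, norm_one, one_mul]
    linarith
  have sF := fun n S => F_sm A n ha hb S (fcR γ)
  have sF0 := fun n S => (Sm.const (-1)).mul (F_sm A n z z S (fcR γ))
  have r1 : sobNorm s (fun x => dSstar1 A a b γ x - dSstar1 A (fun _ => 0) (fun _ => 0) γ x)
      ≤ π * (C0 + C2) * B := by
    refine sob_le_of_series hc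
      (e := fun j x => e1 A a b j x + (-1) * e1 A (fun _ => 0) (fun _ => 0) j x)
      (fun j => (e1_sm A ha hb j).add ((Sm.const (-1)).mul (e1_sm A z z j)))
      (fun j x => nb (e1_norm A a b j x) (e1_norm A _ _ j x))
      (fun x => ?_) fun S => ?_
    · refine (((dS1_hasSum A a b γ h0 hc x).sub (dS1_hasSum A (fun _ => 0) (fun _ => 0) γ h0 hc x)
        ).congr_fun fun j => ?_)
      ring
    · have e : (fun x => ∑ j ∈ S, fcR γ j * (e1 A a b j x + (-1) * e1 A (fun _ => 0) (fun _ => 0) j x))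
          = fun x => π * ((F A 0 a b S (fcR γ) x + (-1) * F A 0 (fun _ => 0) (fun _ => 0) S (fcR γ) x)
            + (-1) * (F A 2 a b S (fcR γ) x + (-1) * F A 2 (fun _ => 0) (fun _ => 0) S (fcR γ) x)) := by
        funext x
        have h1 := e1_sum A a b S (fcR γ) x
        have h2 := e1_sum A (fun _ => 0) (fun _ => 0) S (fcR γ) x
        have h3 : ∑ j ∈ S, fcR γ j * (e1 A a b j x + (-1) * e1 A (fun _ => 0) (fun _ => 0) j x)
          = ∑ j ∈ S, fcR γ j * e1 A a b j x
            - ∑ j ∈ S, fcR γ j * e1 A (fun _ => 0) (fun _ => 0) j x := by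
          rw [← Finset.sum_sub_distrib]
          exact Finset.sum_congr rfl fun j _ => by ring
        rw [h3, h1, h2]; ring
      rw [e]
      refine (sob_sub_le ((sF 0 S).add (sF0 0 S)) ((sF 2 S).add (sF0 2 S)) s).trans ?_
      have f0 := (k0 a b hab S (fcR γ)).trans (mul_le_mul_of_nonneg_left (hB S) hC0)
      have f2 := (k2 a b hab S (fcR γ)).trans (mul_le_mul_of_nonneg_left (hB S) hC2)
      rw [mul_assoc]
      exact mul_le_mul_of_nonneg_left (by linarith) hp.le
  have r2 : sobNorm s (fun x => dSstar2 A a b γ x - dSstar2 A (fun _ => 0) (fun _ => 0) γ x)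
      ≤ 2 * π * C1 * B := by
    refine sob_le_of_series hc
      (e := fun j x => e2 A a b j x + (-1) * e2 A (fun _ => 0) (fun _ => 0) j x)
      (fun j => (e2_sm A ha hb j).add ((Sm.const (-1)).mul (e2_sm A z z j)))
      (fun j x => nb (e2_norm A a b j x) (e2_norm A _ _ j x))
      (fun x => ?_) fun S => ?_
    · refine (((dS2_hasSum A a b γ h0 hc x).sub (dS2_hasSum A (fun _ => 0) (fun _ => 0) γ h0 hc x)
        ).congr_fun fun j => ?_)
      ring
    · have e : (fun x => ∑ j ∈ S, fcR γ j * (e2 A a b j x + (-1) * e2 A (fun _ => 0) (fun _ => 0) j x))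
          = fun x => 2 * π * Complex.I *
            (F A 1 a b S (fcR γ) x + (-1) * F A 1 (fun _ => 0) (fun _ => 0) S (fcR γ) x) := by
        funext x
        have h1 := e2_sum A a b S (fcR γ) x
        have h2 := e2_sum A (fun _ => 0) (fun _ => 0) S (fcR γ) x
        have h3 : ∑ j ∈ S, fcR γ j * (e2 A a b j x + (-1) * e2 A (fun _ => 0) (fun _ => 0) j x)
          = ∑ j ∈ S, fcR γ j * e2 A a b j x
            - ∑ j ∈ S, fcR γ j * e2 A (fun _ => 0) (fun _ => 0) j x := by
          rw [← Finset.sum_sub_distrib]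
          exact Finset.sum_congr rfl fun j _ => by ring
        rw [h3, h1, h2]; ring
      rw [e, sob_smul, two_pi_I_norm, mul_assoc (2 * π)]
      exact mul_le_mul_of_nonneg_left ((k1 a b hab S (fcR γ)).trans
        (mul_le_mul_of_nonneg_left (hB S) hC1)) (by positivity)
  linarith

/-- tame estimates for dS(a,b)* and for dS(a,b)* − dS(0,0)*. -/
theorem statement16 (Astar : ℝ) (hAstar : 0 < Astar) :
    ∃ δ : ℝ, 0 < δ ∧ ∀ s : ℝ, (2 : ℝ) ≤ s → ∃ C : ℝ, 0 < C ∧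
      ∀ a b : ℝ → ℝ, smoothPer a → smoothPer b → pairNorm 3 a b < δ →
        (∀ γ : ℝ → ℝ, Continuous γ → Function.Periodic γ (2 * π) →
          fcR γ 0 = 0 → memHsR (s - 1 / 2) γ →
          sobNorm s (dSstar1 Astar a b γ) + sobNorm s (dSstar2 Astar a b γ) ≤
            C * sobNormR (s - 1 / 2) γ + C * pairNorm s a b * sobNormR (3 / 2) γ) ∧
        (∀ γ : ℝ → ℝ, Continuous γ → Function.Periodic γ (2 * π) →
          fcR γ 0 = 0 → memHsR (s + 1 / 2) γ →
          sobNorm s (fun x =>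
              dSstar1 Astar a b γ x - dSstar1 Astar (fun _ => 0) (fun _ => 0) γ x)
            + sobNorm s (fun x =>
              dSstar2 Astar a b γ x - dSstar2 Astar (fun _ => 0) (fun _ => 0) γ x) ≤
            C * pairNorm 2 a b * sobNormR (s + 1 / 2) γ
              + C * pairNorm s a b * sobNormR (5 / 2) γ) := by
  refine ⟨dl Astar, dl_pos hAstar, fun s hs => ?_⟩
  obtain ⟨C1, hC1, h1⟩ := part_one hAstar hs
  obtain ⟨C2, hC2, h2⟩ := part_two hAstar hs
  refine ⟨C1 + C2 + 1, by positivity, fun a b ha hb hab =>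
    ⟨fun γ _ _ h0 hm => ?_, fun γ _ _ h0 hm => ?_⟩⟩
  · refine (h1 a b ⟨ha, hb, hab⟩ γ h0 hm).trans ?_
    have p := mul_nonneg (pair_nonneg s a b) (sob_nonneg (3 / 2) (cx γ))
    have q := sob_nonneg (s - 1 / 2) (cx γ)
    have e : C1 * (sobNormR (s - 1 / 2) γ + pairNorm s a b * sobNormR (3 / 2) γ) ≤
        (C1 + C2 + 1) * (sobNormR (s - 1 / 2) γ + pairNorm s a b * sobNormR (3 / 2) γ) :=
      mul_le_mul_of_nonneg_right (by linarith) (add_nonneg q p)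
    linarith
  · refine (h2 a b ⟨ha, hb, hab⟩ γ h0 hm).trans ?_
    have p := mul_nonneg (pair_nonneg s a b) (sob_nonneg (5 / 2) (cx γ))
    have q := mul_nonneg (pair_nonneg 2 a b) (sob_nonneg (s + 1 / 2) (cx γ))
    have e : C2 * (pairNorm 2 a b * sobNormR (s + 1 / 2) γ + pairNorm s a b * sobNormR (5 / 2) γ) ≤
        (C1 + C2 + 1) * (pairNorm 2 a b * sobNormR (s + 1 / 2) γ
          + pairNorm s a b * sobNormR (5 / 2) γ) :=
      mul_le_mul_of_nonneg_right (by linarith) (add_nonneg q p)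
    linarith
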